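/- arXiv:1910.12595 — 6 statements merged into one kernel-verified Lean document; each statement's English description precedes it below -/
import Mathlib

section
/- Let α > 0, let s > 0, and let f : [0,∞) → ℝ be continuous with |f(t)| ≤ C e^(σ t) for some constants C ≥ 0 and 0 ≤ σ < s. Then the Laplace transform of the Riemann–Liouville fractional integral of f satisfies ∫₀^∞ e^(-s t) I^α f(t) dt = s^(-α) ∫₀^∞ e^(-s t) f(t) dt. -/
open MeasureTheory

/-- Riemann–Liouville fractional integral of order `α` with base point `0`:
`I^α f(t) = (1/Γ(α)) ∫₀^t (t-τ)^(α-1) f(τ) dτ`. -/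
noncomputable def rlIntegral (α : ℝ) (f : ℝ → ℝ) (t : ℝ) : ℝ :=
  (1 / Real.Gamma α) * ∫ τ in (0:ℝ)..t, (t - τ) ^ (α - 1) * f τ

/-- Laplace transform rule for the Riemann–Liouville fractional integral:
for `α > 0`, `s > 0` and `f` continuous of exponential order `σ < s`,
`∫₀^∞ e^(-st) I^α f(t) dt = s^(-α) ∫₀^∞ e^(-st) f(t) dt`. -/
theorem laplace_rl_integral (α s : ℝ) (hα : 0 < α) (hs : 0 < s)
    (f : ℝ → ℝ) (hf : ContinuousOn f (Set.Ici 0))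
    (C σ : ℝ) (hC : 0 ≤ C) (hσ : 0 ≤ σ) (hσs : σ < s)
    (hbound : ∀ t ≥ (0:ℝ), |f t| ≤ C * Real.exp (σ * t)) :
    ∫ t in Set.Ioi (0:ℝ), Real.exp (-s * t) * rlIntegral α f t
      = s ^ (-α) * ∫ t in Set.Ioi (0:ℝ), Real.exp (-s * t) * f t := by
  have hG : 0 < Real.Gamma α := Real.Gamma_pos_of_pos hα
  have key := Real.integral_rpow_mul_exp_neg_mul_Ioi hα hs
  have hg : IntegrableOn (fun x : ℝ => x ^ (α - 1) * Real.exp (-(s * x))) (Set.Ioi 0) :=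
    .of_integral_ne_zero (by rw [key]; positivity)
  have hfi : IntegrableOn (fun x : ℝ => Real.exp (-s * x) * f x) (Set.Ioi 0) := by
    have hb : IntegrableOn (fun x : ℝ => C * Real.exp (-(s - σ) * x)) (Set.Ioi 0) :=
      (exp_neg_integrableOn_Ioi 0 (sub_pos.2 hσs)).const_mul C
    refine Integrable.mono' hb ?_ ?_
    · refine ContinuousOn.aestronglyMeasurable ?_ measurableSet_Ioi
      exact (Continuous.continuousOn (by fun_prop)).mul (hf.mono Set.Ioi_subset_Ici_self)
    · refine (ae_restrict_iff' measurableSet_Ioi).2 (ae_of_all _ fun x hx => ?_)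
      rw [norm_mul, Real.norm_eq_abs, Real.norm_eq_abs, Real.abs_exp]
      calc Real.exp (-s * x) * |f x| ≤ Real.exp (-s * x) * (C * Real.exp (σ * x)) := by
            gcongr
            exact hbound x (le_of_lt hx)
        _ = C * Real.exp (-(s - σ) * x) := by
            rw [mul_left_comm, ← Real.exp_add]
            ring_nf
  have conv := integral_posConvolution hfi hg (ContinuousLinearMap.mul ℝ ℝ)
  simp only [ContinuousLinearMap.mul_apply'] at conv
  rw [key] at conv
  have hL : ∀ t : ℝ, Real.exp (-s * t) * rlIntegral α f t = (1 / Real.Gamma α) *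
      ∫ x in (0:ℝ)..t, Real.exp (-s * x) * f x *
        ((t - x) ^ (α - 1) * Real.exp (-(s * (t - x)))) := by
    intro t
    rw [rlIntegral, mul_left_comm, ← intervalIntegral.integral_const_mul]
    congr 2
    funext x
    have : Real.exp (-s * t) = Real.exp (-s * x) * Real.exp (-(s * (t - x))) := by
      rw [← Real.exp_add]
      ring_nf
    rw [this]
    ring
  simp_rw [hL]
  rw [integral_const_mul, conv, one_div s, Real.inv_rpow hs.le, ← Real.rpow_neg hs.le]
  field_simp
end

section
/- For every real z, the M-Wright function of order ν = 1/2 reduces to a Gaussian: M_{1/2}(z) = e^(−z²/4) / √π. -/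
/-- The M-Wright function of order `ν ∈ [0,1)`:
`M_ν(z) = Σ_{n=0}^∞ (-z)ⁿ / (n! Γ(-νn + 1 - ν))`. Terms where `Γ` is evaluated at a
nonpositive integer are zero, since `Real.Gamma` vanishes at its poles. -/
noncomputable def mWright (ν z : ℝ) : ℝ :=
  ∑' n : ℕ, (-z) ^ n / (n.factorial * Real.Gamma (-(ν * n) + 1 - ν))

theorem mWright_half_aux (k : ℕ) :
    ((2 * k).factorial : ℝ) * Real.Gamma (1/2 - k) = Real.sqrt Real.pi * k.factorial * (-4) ^ k := by
  induction k with
  | zero => simpa using Real.Gamma_one_half_eq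
  | succ k ih =>
    have h0 : (1/2 - ((k + 1 : ℕ) : ℝ)) ≠ 0 := by
      push_cast
      have : (0:ℝ) ≤ k := k.cast_nonneg
      intro h
      linarith
    have h := Real.Gamma_add_one h0
    rw [show (1/2 - ((k + 1 : ℕ) : ℝ)) + 1 = 1/2 - k by push_cast; ring] at h
    rw [h] at ih
    rw [show 2 * (k + 1) = (2 * k + 1) + 1 by ring, Nat.factorial_succ, Nat.factorial_succ,
      Nat.factorial_succ k, pow_succ]
    push_cast at ih ⊢
    linear_combination (-4 * ((k:ℝ) + 1)) * ih

/-- For `ν = 1/2` the M-Wright function reduces to a Gaussian: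
`M_{1/2}(z) = e^(-z²/4) / √π`. -/
theorem mWright_half (z : ℝ) :
    mWright (1/2) z = Real.exp (-z ^ 2 / 4) / Real.sqrt Real.pi := by
  unfold mWright
  apply HasSum.tsum_eq
  rw [← add_zero (Real.exp (-z ^ 2 / 4) / Real.sqrt Real.pi)]
  apply HasSum.even_add_odd
  · have h := (NormedSpace.expSeries_div_hasSum_exp (-z ^ 2 / 4)).div_const (Real.sqrt Real.pi)
    rw [← Real.exp_eq_exp_ℝ] at h
    refine (congrArg (fun f => HasSum f _) (funext fun k => ?_)).mpr h
    rw [show (-(1 / 2 * ((2 * k : ℕ) : ℝ)) + 1 - 1 / 2) = 1/2 - (k:ℝ) by push_cast; ring,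
      mWright_half_aux, pow_mul, neg_sq, show -z^2/4 = z^2 / (-4) by ring, div_pow, div_div, div_div]
    congr 1
    ring
  · convert hasSum_zero using 1
    funext k
    rw [show (-(1 / 2 * ((2 * k + 1 : ℕ) : ℝ)) + 1 - 1 / 2) = -(k:ℝ) by push_cast; ring,
      Real.Gamma_neg_nat_eq_zero]
    simp
end

section
/- Let 0 < ν < 1 and s ≥ 0. Then the Laplace transform of the M-Wright function is the Mittag-Leffler function: the integral ∫₀^∞ e^(−s z) M_ν(z) dz converges and equals Σ_{n=0}^∞ (−s)^n / Γ(νn + 1). -/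
open MeasureTheory

lemma core_series (m : Measure ℝ) (A ζ : ℝ → ℂ) (hA : Measurable A) (hζ : Measurable ζ) (ν : ℝ)
    (hint : ∀ a c : ℝ, Integrable (fun x => ‖A x‖ * Real.exp (a * (ζ x).re) *
      Real.exp (c * Real.exp (ν * (ζ x).re))) m)
    (hΓ : ∀ w : ℝ, 1 / Real.Gamma w = (∫ x, A x * Complex.exp (-w * ζ x) ∂m).im / Real.pi)
    (z : ℝ) (hz : 0 ≤ z) :
    mWright ν z = (∫ x, A x * Complex.exp (-(1 - ν) * ζ x) *
      Complex.exp (-z * Complex.exp (ν * ζ x)) ∂m).im / Real.pi := by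
  have key := hasSum_integral_of_dominated_convergence (μ := m)
    (F := fun (n : ℕ) x => A x * Complex.exp (-(1 - ν) * ζ x) *
      ((-z * Complex.exp (ν * ζ x)) ^ n / (n.factorial : ℂ)))
    (f := fun x => A x * Complex.exp (-(1 - ν) * ζ x) *
      Complex.exp (-z * Complex.exp (ν * ζ x)))
    (fun n x => ‖A x‖ * Real.exp (-(1 - ν) * (ζ x).re) *
      ((z * Real.exp (ν * (ζ x).re)) ^ n / (n.factorial : ℝ)))
    (fun n => by
      apply Measurable.aestronglyMeasurable
      fun_prop)
    (fun n => by
      refine Filter.Eventually.of_forall fun x => le_of_eq ?_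
      simp [Complex.norm_exp, abs_of_nonneg hz])
    (by
      refine Filter.Eventually.of_forall fun x => ?_
      exact (Real.summable_pow_div_factorial _).mul_left _)
    (by
      refine (hint (-(1 - ν)) z).congr (Filter.Eventually.of_forall fun x => ?_)
      simp only
      rw [tsum_mul_left, Real.exp_eq_exp_ℝ, NormedSpace.exp_eq_tsum_div])
    (by
      refine Filter.Eventually.of_forall fun x => ?_
      refine HasSum.mul_left _ ?_
      rw [Complex.exp_eq_exp_ℂ]
      exact NormedSpace.expSeries_div_hasSum_exp _)
  have k2 := (Complex.hasSum_im key).div_const Real.pi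
  rw [← k2.tsum_eq, mWright]
  congr 1
  ext n
  have e : ∀ x, A x * Complex.exp (-(1 - ν) * ζ x) *
      ((-z * Complex.exp (ν * ζ x)) ^ n / (n.factorial : ℂ)) =
      (((-z) ^ n / n.factorial : ℝ) : ℂ) *
        (A x * Complex.exp (-((-(ν * n) + 1 - ν : ℝ) : ℂ) * ζ x)) := by
    intro x
    rw [mul_pow, ← Complex.exp_nat_mul]
    push_cast
    rw [show -(-((ν:ℂ) * n) + 1 - ν) * ζ x = -(1 - ν) * ζ x + n * (ν * ζ x) by ring,
      Complex.exp_add]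
    ring
  simp_rw [e]
  rw [integral_const_mul, Complex.im_ofReal_mul, mul_div_assoc, ← hΓ, div_mul_div_comm, mul_one]

lemma core (m : Measure ℝ) [SFinite m] (A ζ : ℝ → ℂ) (hA : Measurable A) (hζ : Measurable ζ)
    (ν s δ q : ℝ) (hs : 0 ≤ s) (hδ : 0 < δ) (hq0 : 0 ≤ q) (hq : q < 1)
    (hint : ∀ a c : ℝ, Integrable (fun x => ‖A x‖ * Real.exp (a * (ζ x).re) *
      Real.exp (c * Real.exp (ν * (ζ x).re))) m)
    (hΓ : ∀ w : ℝ, 1 / Real.Gamma w = (∫ x, A x * Complex.exp (-w * ζ x) ∂m).im / Real.pi)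
    (hRe : ∀ᵐ x ∂m, δ ≤ (Complex.exp (ν * ζ x)).re)
    (hbig : ∀ᵐ x ∂m, s ≤ q * Real.exp (ν * (ζ x).re)) :
    IntegrableOn (fun z => Real.exp (-s * z) * mWright ν z) (Set.Ioi 0) ∧
    ∫ z in Set.Ioi (0:ℝ), Real.exp (-s * z) * mWright ν z
      = ∑' n : ℕ, (-s) ^ n / Real.Gamma (ν * n + 1) := by
  have hint' : ∀ a : ℝ, Integrable (fun x => ‖A x‖ * Real.exp (a * (ζ x).re)) m := by
    intro a
    simpa using hint a 0
  let G : ℝ × ℝ → ℂ := fun p => Complex.exp (-s * p.1) * (A p.2 * Complex.exp (-(1 - ν) * ζ p.2) *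
      Complex.exp (-p.1 * Complex.exp (ν * ζ p.2)))
  have hG : Integrable G ((volume.restrict (Set.Ioi 0)).prod m) := by
    have h1 : Integrable (fun z : ℝ => Real.exp (-δ * z)) (volume.restrict (Set.Ioi 0)) :=
      exp_neg_integrableOn_Ioi 0 hδ
    have h2 := h1.mul_prod (hint' (-(1 - ν)))
    refine h2.mono' ?_ ?_
    · apply Measurable.aestronglyMeasurable
      fun_prop
    · have a1 : ∀ᵐ p ∂((volume.restrict (Set.Ioi (0:ℝ))).prod m), p.1 ∈ Set.Ioi (0:ℝ) :=
        Measure.quasiMeasurePreserving_fst.ae (ae_restrict_mem measurableSet_Ioi)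
      have a2 : ∀ᵐ p ∂((volume.restrict (Set.Ioi (0:ℝ))).prod m),
          δ ≤ (Complex.exp (ν * ζ p.2)).re :=
        Measure.quasiMeasurePreserving_snd.ae hRe
      filter_upwards [a1, a2] with p hp1 hp2
      have hp1 : 0 < p.1 := hp1
      simp only [G, norm_mul, Complex.norm_exp]
      have e1 : Real.exp (-s * p.1 : ℂ).re ≤ 1 := by
        rw [Real.exp_le_one_iff]
        have : (-s * p.1 : ℂ).re = -(s * p.1) := by simp
        rw [this]
        have := mul_nonneg hs hp1.le
        linarith
      have e2 : Real.exp (-p.1 * Complex.exp (ν * ζ p.2) : ℂ).re ≤ Real.exp (-δ * p.1) := by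
        rw [Real.exp_le_exp]
        have : (-p.1 * Complex.exp (ν * ζ p.2) : ℂ).re = -p.1 * (Complex.exp (ν * ζ p.2)).re := by
          rw [← Complex.ofReal_neg, Complex.re_ofReal_mul]
        rw [this]
        nlinarith
      have e3 : (-(1 - ν) * ζ p.2 : ℂ).re = -(1 - ν) * (ζ p.2).re := by
        simp
      rw [e3]
      have e4 : 0 ≤ ‖A p.2‖ * Real.exp (-(1 - ν) * (ζ p.2).re) := by positivity
      calc _ ≤ 1 * (‖A p.2‖ * Real.exp (-(1 - ν) * (ζ p.2).re) * Real.exp (-δ * p.1)) := by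
            gcongr
        _ = _ := by ring
  have hrep : ∀ z ∈ Set.Ioi (0:ℝ), Real.exp (-s * z) * mWright ν z =
      (∫ x, G (z, x) ∂m).im / Real.pi := by
    intro z hz
    rw [core_series m A ζ hA hζ ν hint hΓ z (le_of_lt hz)]
    simp only [G]
    rw [integral_const_mul]
    have : Complex.exp (-s * z) = ((Real.exp (-s * z) : ℝ) : ℂ) := by simp
    rw [this, Complex.im_ofReal_mul]
    ring
  have hI : Integrable (fun z => ∫ x, G (z, x) ∂m) (volume.restrict (Set.Ioi 0)) :=
    hG.integral_prod_left
  refine ⟨?_, ?_⟩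
  · have : IntegrableOn (fun z => (∫ x, G (z, x) ∂m).im / Real.pi) (Set.Ioi 0) :=
      hI.im.div_const _
    exact this.congr_fun (fun z hz => (hrep z hz).symm) measurableSet_Ioi
  rw [setIntegral_congr_fun measurableSet_Ioi hrep, integral_div]
  have him : ∫ z in Set.Ioi (0:ℝ), (∫ x, G (z, x) ∂m).im =
      (∫ z in Set.Ioi (0:ℝ), (∫ x, G (z, x) ∂m)).im := integral_im hI
  rw [him, integral_integral_swap hG]
  -- inner integral
  have hinner : ∀ᵐ x ∂m, ∫ z in Set.Ioi (0:ℝ), G (z, x) =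
      A x * Complex.exp (-(1 - ν) * ζ x) / (s + Complex.exp (ν * ζ x)) := by
    filter_upwards [hRe] with x hx
    have e : ∀ z : ℝ, G (z, x) = A x * Complex.exp (-(1 - ν) * ζ x) *
        Complex.exp (-(s + Complex.exp (ν * ζ x)) * z) := by
      intro z
      simp only [G]
      rw [show -((s:ℂ) + Complex.exp (ν * ζ x)) * z = -s * z + -z * Complex.exp (ν * ζ x) by ring,
        Complex.exp_add]
      ring
    simp_rw [e]
    have hneg : (-((s:ℂ) + Complex.exp (ν * ζ x))).re < 0 := by
      simp only [Complex.neg_re, Complex.add_re, Complex.ofReal_re]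
      linarith
    rw [integral_const_mul, integral_exp_mul_complex_Ioi hneg]
    rw [Complex.ofReal_zero, mul_zero, Complex.exp_zero, div_neg, neg_div, neg_neg, mul_one_div]
  rw [integral_congr_ae hinner]
  have key := hasSum_integral_of_dominated_convergence (μ := m)
    (F := fun (n : ℕ) x => (((-s) ^ n : ℝ) : ℂ) *
      (A x * Complex.exp (-((ν * n + 1 : ℝ) : ℂ) * ζ x)))
    (f := fun x => A x * Complex.exp (-(1 - ν) * ζ x) / (s + Complex.exp (ν * ζ x)))
    (fun n x => ‖A x‖ * Real.exp (-1 * (ζ x).re) * q ^ n)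
    (fun n => by
      apply Measurable.aestronglyMeasurable
      fun_prop)
    (fun n => by
      filter_upwards [hbig] with x hx
      have h1 : s * Real.exp (-(ν * (ζ x).re)) ≤ q := by
        rw [Real.exp_neg, ← div_eq_mul_inv, div_le_iff₀ (Real.exp_pos _)]
        exact hx
      have h2 : s ^ n * Real.exp (-(n * (ν * (ζ x).re))) ≤ q ^ n := by
        rw [← mul_neg, Real.exp_nat_mul, ← mul_pow]
        gcongr
      rw [norm_mul, norm_mul, Complex.norm_exp, Complex.norm_real, norm_pow, norm_neg,
        Real.norm_of_nonneg hs, ← Complex.ofReal_neg, Complex.re_ofReal_mul,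
        show -(ν * n + 1) * (ζ x).re = -1 * (ζ x).re + -(n * (ν * (ζ x).re)) by ring, Real.exp_add]
      calc _ = ‖A x‖ * Real.exp (-1 * (ζ x).re) * (s ^ n * Real.exp (-(n * (ν * (ζ x).re)))) := by
            ring
        _ ≤ _ := by gcongr)
    (by
      refine Filter.Eventually.of_forall fun x => ?_
      exact (summable_geometric_of_lt_one hq0 hq).mul_left _)
    (by
      simp_rw [tsum_mul_left]
      exact (hint' (-1)).mul_const _)
    (by
      filter_upwards [hbig] with x hx
      have hT : ‖Complex.exp (ν * ζ x)‖ = Real.exp (ν * (ζ x).re) := by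
        rw [Complex.norm_exp, Complex.re_ofReal_mul]
      set T := Complex.exp (ν * ζ x) with hTd
      have hT0 : T ≠ 0 := Complex.exp_ne_zero _
      have hlt : ‖-(s:ℂ) / T‖ < 1 := by
        rw [norm_div, norm_neg, Complex.norm_real, Real.norm_of_nonneg hs, hT,
          div_lt_one (Real.exp_pos _)]
        nlinarith [Real.exp_pos (ν * (ζ x).re)]
      have hg := (hasSum_geometric_of_norm_lt_one hlt).mul_left (A x * Complex.exp (-ζ x))
      have hsT : (s:ℂ) + T ≠ 0 := by
        intro h
        have : -(s:ℂ) / T = 1 := by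
          rw [div_eq_one_iff_eq hT0]; linear_combination -h
        rw [this] at hlt
        simp at hlt
      convert! hg using 1
      · funext n
        rw [div_pow, hTd, ← Complex.exp_nat_mul]
        push_cast
        rw [show -((ν:ℂ) * n + 1) * ζ x = -ζ x - n * (ν * ζ x) by ring, Complex.exp_sub]
        ring
      · rw [show -(1 - (ν:ℂ)) * ζ x = -ζ x + ν * ζ x by ring, Complex.exp_add, ← hTd]
        have : 1 - -(s:ℂ) / T = (s + T) / T := by field_simp; ring
        rw [this, inv_div]
        ring)
  have k2 := (Complex.hasSum_im key).div_const Real.pi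
  rw [← k2.tsum_eq]
  congr 1
  ext n
  rw [integral_const_mul, Complex.im_ofReal_mul, mul_div_assoc, ← hΓ]
  ring

open Filter Topology

lemma exponent_atBot (k c a ν : ℝ) (hk : 0 < k) (hν : ν < 1) :
    Tendsto (fun x : ℝ => -k * Real.exp x + c * Real.exp (ν * x) + a * x) atTop atBot := by
  have h1 : Tendsto (fun x : ℝ => Real.exp (-(1 - ν) * x)) atTop (𝓝 0) := by
    apply Real.tendsto_exp_atBot.comp
    apply Tendsto.const_mul_atTop_of_neg (by linarith) tendsto_id
  have h2 : Tendsto (fun x : ℝ => x ^ 1 * Real.exp (-x)) atTop (𝓝 0) :=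
    Real.tendsto_pow_mul_exp_neg_atTop_nhds_zero 1
  have h3 : Tendsto (fun x : ℝ => -k + c * Real.exp (-(1 - ν) * x) + a * (x ^ 1 * Real.exp (-x)))
      atTop (𝓝 (-k + c * 0 + a * 0)) := (tendsto_const_nhds.add (h1.const_mul c)).add (h2.const_mul a)
  have h4 := Real.tendsto_exp_atTop.atTop_mul_neg (by linarith : -k + c * 0 + a * 0 < 0) h3
  refine h4.congr fun x => ?_
  have e1 : Real.exp x * Real.exp (-(1 - ν) * x) = Real.exp (ν * x) := by
    rw [← Real.exp_add]; ring_nf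
  have e2 : Real.exp x * Real.exp (-x) = 1 := by
    rw [← Real.exp_add]; simp
  linear_combination c * e1 + a * x * e2

lemma exponent_integrable (k c a ν t : ℝ) (hk : 0 < k) (hν : ν < 1) :
    IntegrableOn (fun x : ℝ => Real.exp (-k * Real.exp x + c * Real.exp (ν * x) + a * x))
      (Set.Ioi t) := by
  refine integrable_of_isBigO_exp_neg (b := 1) one_pos ?_ ?_
  · fun_prop
  · apply Asymptotics.IsBigO.of_bound 1
    filter_upwards [(exponent_atBot k c (a + 1) ν hk hν).eventually_le_atBot 0] with x hx
    rw [Real.norm_of_nonneg (Real.exp_pos _).le, Real.norm_of_nonneg (Real.exp_pos _).le, one_mul,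
      Real.exp_le_exp]
    linarith

noncomputable def hkF (p : ℝ) (ζ : ℂ) : ℂ := Complex.exp (Complex.exp ζ + p * ζ)

lemma hkF_norm (p x y : ℝ) :
    ‖hkF p (x + y * Complex.I)‖ = Real.exp (Real.exp x * Real.cos y + p * x) := by
  rw [hkF, Complex.norm_exp]
  congr 1
  simp [Complex.exp_re]

lemma hkF_cont (p : ℝ) : Continuous (hkF p) := by
  unfold hkF; fun_prop

lemma hkF_deriv (p : ℝ) (ζ : ℂ) : HasDerivAt (hkF p) (hkF (p + 1) ζ + p * hkF p ζ) ζ := by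
  have h : HasDerivAt (fun ζ : ℂ => Complex.exp ζ + p * ζ) (Complex.exp ζ + p * 1) ζ :=
    (Complex.hasDerivAt_exp ζ).add ((hasDerivAt_id ζ).const_mul (p : ℂ))
  have h2 := h.cexp
  convert! h2 using 1
  simp only [hkF]
  push_cast
  rw [show Complex.exp ζ + (p + 1) * ζ = (Complex.exp ζ + p * ζ) + ζ by ring, Complex.exp_add _ ζ]
  ring

lemma hkF_real (p x : ℝ) : hkF p x = ((Real.exp (Real.exp x + p * x) : ℝ) : ℂ) := by
  simp [hkF]

lemma hkF_pi (p x : ℝ) : hkF p (x + Real.pi * Complex.I) =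
    Complex.exp (p * Real.pi * Complex.I) * ((Real.exp (-Real.exp x + p * x) : ℝ) : ℂ) := by
  simp only [hkF]
  push_cast
  rw [Complex.exp_add_pi_mul_I, ← Complex.exp_add]
  ring_nf

lemma hkF_ray_integrable (p b φ : ℝ) (hφ : Real.cos φ < 0) :
    IntegrableOn (fun x : ℝ => hkF p (x + φ * Complex.I)) (Set.Ioi b) := by
  have := exponent_integrable (-Real.cos φ) 0 p 0 b (by linarith) one_pos
  refine Integrable.mono' this ?_ ?_
  · exact ((hkF_cont p).comp (by fun_prop)).aestronglyMeasurable
  · refine Eventually.of_forall fun x => le_of_eq ?_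
    rw [hkF_norm]
    congr 1
    ring

/-- The half Hankel contour integral. -/
noncomputable def hkH (b φ p : ℝ) : ℂ :=
  Complex.I * (∫ y in (0:ℝ)..φ, hkF p (b + y * Complex.I)) +
    ∫ x in Set.Ioi b, hkF p (x + φ * Complex.I)

lemma hkH_rec (b φ p : ℝ) (hφ : Real.cos φ < 0) :
    hkH b φ (p + 1) + p * hkH b φ p = -hkF p b := by
  have harc : Complex.I * (∫ y in (0:ℝ)..φ, hkF (p + 1) (b + y * Complex.I)) +
      p * (Complex.I * (∫ y in (0:ℝ)..φ, hkF p (b + y * Complex.I))) =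
      hkF p (b + φ * Complex.I) - hkF p b := by
    have hd : ∀ y ∈ Set.uIcc 0 φ, HasDerivAt (fun y : ℝ => hkF p (b + y * Complex.I))
        (Complex.I * hkF (p + 1) (b + y * Complex.I) +
          p * (Complex.I * hkF p (b + y * Complex.I))) y := by
      intro y _
      have h1 : HasDerivAt (fun y : ℝ => (b:ℂ) + y * Complex.I) (1 * Complex.I) y :=
        ((Complex.ofRealCLM.hasDerivAt (x := y)).mul_const Complex.I).const_add (b:ℂ)
      have h2 := (hkF_deriv p (b + y * Complex.I)).comp y h1
      convert! h2 using 1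
      ring
    have c1 : ∀ p, Continuous fun y : ℝ => hkF p (b + y * Complex.I) := fun p =>
      (hkF_cont p).comp (by fun_prop)
    have h := intervalIntegral.integral_eq_sub_of_hasDerivAt hd (by
      apply Continuous.intervalIntegrable
      have := c1 p
      have := c1 (p + 1)
      fun_prop)
    rw [intervalIntegral.integral_add, intervalIntegral.integral_const_mul,
      intervalIntegral.integral_const_mul, intervalIntegral.integral_const_mul] at h
    · simpa using h
    · exact ((c1 _).const_mul _).intervalIntegrable _ _
    · exact (((c1 _).const_mul _).const_mul _).intervalIntegrable _ _
  have hray : (∫ x in Set.Ioi b, hkF (p + 1) (x + φ * Complex.I)) +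
      p * (∫ x in Set.Ioi b, hkF p (x + φ * Complex.I)) = 0 - hkF p (b + φ * Complex.I) := by
    have hd : ∀ x ∈ Set.Ici b, HasDerivAt (fun x : ℝ => hkF p (x + φ * Complex.I))
        (hkF (p + 1) (x + φ * Complex.I) + p * hkF p (x + φ * Complex.I)) x := by
      intro x _
      have h1 : HasDerivAt (fun x : ℝ => (x:ℂ) + φ * Complex.I) 1 x :=
        (Complex.ofRealCLM.hasDerivAt (x := x)).add_const (φ * Complex.I)
      have h2 := (hkF_deriv p (x + φ * Complex.I)).comp x h1
      convert! h2 using 1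
      ring
    have ht : Tendsto (fun x : ℝ => hkF p (x + φ * Complex.I)) atTop (𝓝 0) := by
      rw [tendsto_zero_iff_norm_tendsto_zero]
      simp_rw [hkF_norm]
      have := Real.tendsto_exp_atBot.comp (exponent_atBot (-Real.cos φ) 0 p 0 (by linarith) one_pos)
      refine this.congr fun x => ?_
      simp only [Function.comp]
      congr 1
      ring
    have i1 := hkF_ray_integrable (p + 1) b φ hφ
    have i2 := (hkF_ray_integrable p b φ hφ).const_mul (p : ℂ)
    have h := integral_Ioi_of_hasDerivAt_of_tendsto' hd (i1.add i2) ht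
    rw [integral_add i1 i2, integral_const_mul] at h
    exact h
  unfold hkH
  linear_combination harc + hray

lemma gamma_exp (p : ℝ) (hp : 0 < p) :
    Integrable (fun x : ℝ => Real.exp (-Real.exp x + p * x)) ∧
    ∫ x : ℝ, Real.exp (-Real.exp x + p * x) = Real.Gamma p := by
  have himg : Real.exp '' Set.univ = Set.Ioi 0 := by rw [Set.image_univ, Real.range_exp]
  have hd : ∀ x ∈ (Set.univ : Set ℝ), HasDerivWithinAt Real.exp (Real.exp x) Set.univ x :=
    fun x _ => (Real.hasDerivAt_exp x).hasDerivWithinAt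
  have e : ∀ x : ℝ, |Real.exp x| • (Real.exp (-Real.exp x) * Real.exp x ^ (p - 1)) =
      Real.exp (-Real.exp x + p * x) := by
    intro x
    rw [abs_of_pos (Real.exp_pos _), ← Real.exp_mul, smul_eq_mul, ← Real.exp_add, ← Real.exp_add]
    ring_nf
  constructor
  · have := (integrableOn_image_iff_integrableOn_abs_deriv_smul MeasurableSet.univ hd
      Real.exp_injective.injOn (fun r => Real.exp (-r) * r ^ (p - 1))).1 (by
        rw [himg]; exact Real.GammaIntegral_convergent hp)
    simp_rw [e] at this
    exact integrableOn_univ.1 this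
  · have := integral_image_eq_integral_abs_deriv_smul MeasurableSet.univ hd
      Real.exp_injective.injOn (fun r => Real.exp (-r) * r ^ (p - 1))
    simp_rw [e] at this
    rw [himg, Measure.restrict_univ] at this
    rw [← this, Real.Gamma_eq_integral hp]

lemma hkH_pos (b φ p : ℝ) (hφ : Real.cos φ < 0) (h0 : 0 ≤ φ) (hπ : φ ≤ Real.pi) (hp : 0 < p) :
    (hkH b φ p).im = Real.sin (p * Real.pi) * Real.Gamma p := by
  have hdiff : Differentiable ℂ (hkF p) := fun ζ => (hkF_deriv p ζ).differentiableAt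
  obtain ⟨gi, gv⟩ := gamma_exp p hp
  have gi' : Integrable (fun x : ℝ => hkF p (x + Real.pi * Complex.I)) := by
    simp_rw [hkF_pi]
    exact gi.ofReal.const_mul _
  have gv' : ∫ x : ℝ, hkF p (x + Real.pi * Complex.I) =
      Complex.exp (p * Real.pi * Complex.I) * ((Real.Gamma p : ℝ) : ℂ) := by
    simp_rw [hkF_pi]
    rw [integral_const_mul, integral_complex_ofReal, gv]
  have hvc : ∀ t : ℝ, Continuous fun y : ℝ => hkF p (t + y * Complex.I) := fun t =>
    (hkF_cont p).comp (by fun_prop)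
  have hhc : ∀ y : ℝ, Continuous fun x : ℝ => hkF p (x + y * Complex.I) := fun t =>
    (hkF_cont p).comp (by fun_prop)
  have rect1 : ∀ a : ℝ, (∫ x in a..b, hkF p x) - (∫ x in a..b, hkF p (x + Real.pi * Complex.I)) +
      Complex.I * (∫ y in (0:ℝ)..Real.pi, hkF p (b + y * Complex.I)) -
      Complex.I * (∫ y in (0:ℝ)..Real.pi, hkF p (a + y * Complex.I)) = 0 := by
    intro a
    have := Complex.integral_boundary_rect_eq_zero_of_differentiableOn (hkF p) a
      (b + Real.pi * Complex.I) hdiff.differentiableOn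
    simpa using this
  have rect2 : ∀ B : ℝ, (∫ x in b..B, hkF p (x + φ * Complex.I)) -
      (∫ x in b..B, hkF p (x + Real.pi * Complex.I)) +
      Complex.I * (∫ y in φ..Real.pi, hkF p (B + y * Complex.I)) -
      Complex.I * (∫ y in φ..Real.pi, hkF p (b + y * Complex.I)) = 0 := by
    intro B
    have := Complex.integral_boundary_rect_eq_zero_of_differentiableOn (hkF p) (b + φ * Complex.I)
      (B + Real.pi * Complex.I) hdiff.differentiableOn
    simpa using this
  have hreal : ∀ a : ℝ, (∫ x in a..b, hkF p x).im = 0 := by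
    intro a
    simp_rw [hkF_real]
    rw [intervalIntegral.integral_ofReal, Complex.ofReal_im]
  have hE1 : Tendsto (fun T : ℝ => ∫ y in (0:ℝ)..Real.pi, hkF p ((-T : ℝ) + y * Complex.I)) atTop
      (𝓝 0) := by
    apply squeeze_zero_norm (a := fun T : ℝ => Real.exp (Real.exp (-T) + p * (-T)) * |Real.pi - 0|)
    · intro T
      apply intervalIntegral.norm_integral_le_of_norm_le_const
      intro y _
      rw [hkF_norm, Real.exp_le_exp]
      nlinarith [Real.exp_pos (-T), Real.cos_le_one y]
    · rw [show 𝓝 (0:ℝ) = 𝓝 (0 * |Real.pi - 0|) by simp]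
      apply Tendsto.mul_const
      apply Real.tendsto_exp_atBot.comp
      apply Tendsto.add_atBot (C := 0)
      · exact Real.tendsto_exp_neg_atTop_nhds_zero
      · exact tendsto_neg_atTop_atBot.const_mul_atBot hp
  have hE2 : Tendsto (fun T : ℝ => ∫ y in φ..Real.pi, hkF p (T + y * Complex.I)) atTop
      (𝓝 0) := by
    apply squeeze_zero_norm
      (a := fun T : ℝ => Real.exp (Real.exp T * Real.cos φ + p * T) * |Real.pi - φ|)
    · intro T
      apply intervalIntegral.norm_integral_le_of_norm_le_const
      intro y hy
      rw [Set.uIoc_of_le hπ] at hy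
      rw [hkF_norm, Real.exp_le_exp]
      have : Real.cos y ≤ Real.cos φ := Real.cos_le_cos_of_nonneg_of_le_pi h0 hy.2 hy.1.le
      nlinarith [Real.exp_pos T]
    · rw [show (0:ℝ) = 0 * |Real.pi - φ| by simp]
      apply Tendsto.mul_const
      have := Real.tendsto_exp_atBot.comp (exponent_atBot (-Real.cos φ) 0 p 0 (by linarith) one_pos)
      refine this.congr fun x => ?_
      simp only [Function.comp]
      congr 1
      ring
  have hL1 : Tendsto (fun T : ℝ => ∫ x in (-T)..T, hkF p (x + Real.pi * Complex.I)) atTop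
      (𝓝 (∫ x : ℝ, hkF p (x + Real.pi * Complex.I))) :=
    intervalIntegral_tendsto_integral gi' tendsto_neg_atTop_atBot tendsto_id
  have hL2 : Tendsto (fun T : ℝ => ∫ x in b..T, hkF p (x + φ * Complex.I)) atTop
      (𝓝 (∫ x in Set.Ioi b, hkF p (x + φ * Complex.I))) :=
    intervalIntegral_tendsto_integral_Ioi b (hkF_ray_integrable p b φ hφ) tendsto_id
  -- the identity at finite `T`
  have hfin : ∀ T : ℝ, (Complex.I * (∫ y in (0:ℝ)..φ, hkF p (b + y * Complex.I)) +
      (∫ x in b..T, hkF p (x + φ * Complex.I)) -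
      (∫ x in (-T)..T, hkF p (x + Real.pi * Complex.I)) +
      Complex.I * (∫ y in φ..Real.pi, hkF p (T + y * Complex.I)) -
      Complex.I * (∫ y in (0:ℝ)..Real.pi, hkF p ((-T : ℝ) + y * Complex.I))).im = 0 := by
    intro T
    have s1 := intervalIntegral.integral_add_adjacent_intervals (μ := volume)
      ((hvc b).intervalIntegrable 0 φ) ((hvc b).intervalIntegrable φ Real.pi)
    have s2 := intervalIntegral.integral_add_adjacent_intervals (μ := volume)
      ((hhc Real.pi).intervalIntegrable (-T) b) ((hhc Real.pi).intervalIntegrable b T)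
    have r1 := rect1 (-T)
    have r2 := rect2 T
    have h3 := hreal (-T)
    rw [← neg_eq_zero, ← Complex.neg_im] at h3
    refine Eq.trans ?_ h3
    congr 1
    linear_combination r1 + r2 + Complex.I * s1 + s2
  have hlim := (((tendsto_const_nhds (x := Complex.I *
    (∫ y in (0:ℝ)..φ, hkF p (b + y * Complex.I)))).add hL2).sub hL1).add (hE2.const_mul Complex.I)
    |>.sub (hE1.const_mul Complex.I)
  have hlim2 := (Complex.continuous_im.tendsto _).comp hlim
  have hz := tendsto_nhds_unique (hlim2.congr (f₂ := fun _ => (0:ℝ)) (fun T => hfin T)) tendsto_const_nhds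
  rw [gv'] at hz
  have : (Complex.exp (p * Real.pi * Complex.I) * ((Real.Gamma p : ℝ) : ℂ)).im =
      Real.sin (p * Real.pi) * Real.Gamma p := by
    rw [Complex.im_mul_ofReal, ← Complex.ofReal_mul, Complex.exp_ofReal_mul_I_im]
  rw [← this]
  simp only [mul_zero, add_zero, sub_zero, Complex.sub_im] at hz
  unfold hkH
  linarith

/-- Parametrisation of the (logarithm of the) half Hankel contour by `(0, ∞)`. -/
noncomputable def hkZ (b φ x : ℝ) : ℂ := ((b + max (x - φ) 0 : ℝ) : ℂ) + ((min x φ : ℝ) : ℂ) * Complex.I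

/-- The weight along the contour. -/
noncomputable def hkA (b φ x : ℝ) : ℂ :=
  hkF 1 (hkZ b φ x) * (if x ≤ φ then Complex.I else 1)

lemma hkZ_cont (b φ : ℝ) : Continuous (hkZ b φ) := by
  unfold hkZ
  fun_prop

lemma hkZ_re (b φ x : ℝ) : (hkZ b φ x).re = b + max (x - φ) 0 := by
  simp [hkZ]

lemma hkZ_im (b φ x : ℝ) : (hkZ b φ x).im = min x φ := by
  simp [hkZ]

lemma hkA_meas (b φ : ℝ) : Measurable (hkA b φ) := by
  unfold hkA
  apply Measurable.mul
  · exact ((hkF_cont 1).comp (hkZ_cont b φ)).measurable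
  · exact Measurable.ite measurableSet_Iic measurable_const measurable_const

lemma hkF_mul_exp (p w : ℝ) (ζ : ℂ) : hkF p ζ * Complex.exp (-w * ζ) = hkF (p - w) ζ := by
  simp only [hkF]
  rw [← Complex.exp_add]
  push_cast
  ring_nf

lemma hkA_norm (b φ x : ℝ) : ‖hkA b φ x‖ =
    Real.exp (Real.exp (b + max (x - φ) 0) * Real.cos (min x φ) + 1 * (b + max (x - φ) 0)) := by
  rw [hkA, norm_mul]
  have : ‖(if x ≤ φ then Complex.I else 1 : ℂ)‖ = 1 := by split_ifs <;> simp
  rw [this, mul_one, hkZ, hkF_norm]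

lemma hkA_integrable (b φ ν : ℝ) (hφ : Real.cos φ < 0) (h0 : 0 ≤ φ) (hν : ν < 1) (a c : ℝ) :
    Integrable (fun x => ‖hkA b φ x‖ * Real.exp (a * (hkZ b φ x).re) *
      Real.exp (c * Real.exp (ν * (hkZ b φ x).re))) (volume.restrict (Set.Ioi 0)) := by
  simp_rw [hkA_norm, hkZ_re]
  change IntegrableOn _ _ _
  rw [← Set.Ioc_union_Ioi_eq_Ioi h0]
  apply IntegrableOn.union
  · apply (Continuous.integrableOn_Icc (a := 0) (b := φ) ?_).mono_set Set.Ioc_subset_Icc_self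
    fun_prop
  · have h := exponent_integrable (-(Real.exp (b - φ) * Real.cos φ)) (c * Real.exp (ν * (b - φ)))
      (a + 1) ν φ (by nlinarith [Real.exp_pos (b - φ)]) hν
    have h2 := h.const_mul (Real.exp ((a + 1) * (b - φ)))
    refine IntegrableOn.congr_fun h2 ?_ measurableSet_Ioi
    intro x hx
    have hx : φ < x := hx
    simp only
    rw [min_eq_right hx.le, max_eq_left (by linarith), ← Real.exp_add, ← Real.exp_add,
      ← Real.exp_add, show b + (x - φ) = (b - φ) + x by ring, mul_add ν, Real.exp_add (b - φ),
      Real.exp_add (ν * (b - φ))]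
    congr 1
    ring

lemma hkA_integral (b φ w : ℝ) (hφ : Real.cos φ < 0) (h0 : 0 ≤ φ) :
    ∫ x in Set.Ioi 0, hkA b φ x * Complex.exp (-w * hkZ b φ x) = hkH b φ (1 - w) := by
  have e1 : ∀ x ∈ Set.Ioc 0 φ, hkA b φ x * Complex.exp (-w * hkZ b φ x) =
      Complex.I * hkF (1 - w) (b + x * Complex.I) := by
    intro x hx
    rw [hkA, mul_right_comm, hkF_mul_exp, if_pos hx.2, hkZ, min_eq_left hx.2,
      max_eq_right (by linarith [hx.2]), add_zero, mul_comm]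
  have e2 : ∀ x ∈ Set.Ioi φ, hkA b φ x * Complex.exp (-w * hkZ b φ x) =
      hkF (1 - w) ((x + (b - φ) : ℝ) + φ * Complex.I) := by
    intro x hx
    have hx : φ < x := hx
    rw [hkA, mul_right_comm, hkF_mul_exp, if_neg (not_le.2 hx), hkZ, min_eq_right hx.le,
      max_eq_left (by linarith), mul_one, show b + (x - φ) = x + (b - φ) by ring]
  have hmp := measurePreserving_add_right (volume : Measure ℝ) (b - φ)
  have hme := (MeasurableEquiv.addRight (b - φ)).measurableEmbedding
  have hpre : (fun x => x + (b - φ)) ⁻¹' (Set.Ioi b) = Set.Ioi φ := by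
    ext x; simp only [Set.mem_preimage, Set.mem_Ioi]; constructor <;> intro h <;> linarith
  have i2 : IntegrableOn (fun x : ℝ => hkF (1 - w) ((x + (b - φ) : ℝ) + φ * Complex.I))
      (Set.Ioi φ) := by
    have := (hmp.integrableOn_comp_preimage hme (s := Set.Ioi b)
      (f := fun x : ℝ => hkF (1 - w) (x + φ * Complex.I))).2 (hkF_ray_integrable _ b φ hφ)
    rw [hpre] at this
    exact this
  have v2 : ∫ x in Set.Ioi φ, hkF (1 - w) ((x + (b - φ) : ℝ) + φ * Complex.I) =
      ∫ x in Set.Ioi b, hkF (1 - w) (x + φ * Complex.I) := by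
    have := hmp.setIntegral_preimage_emb hme
      (fun x : ℝ => hkF (1 - w) (x + φ * Complex.I)) (Set.Ioi b)
    rw [hpre] at this
    exact this
  have c1 : Continuous fun y : ℝ => Complex.I * hkF (1 - w) (b + y * Complex.I) :=
    continuous_const.mul ((hkF_cont _).comp (by fun_prop))
  rw [← Set.Ioc_union_Ioi_eq_Ioi h0, setIntegral_union (Set.Ioc_disjoint_Ioi le_rfl)
    measurableSet_Ioi, setIntegral_congr_fun measurableSet_Ioc e1,
    setIntegral_congr_fun measurableSet_Ioi e2, v2, integral_const_mul, hkH,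
    intervalIntegral.integral_of_le h0]
  · exact (c1.integrableOn_Icc.mono_set Set.Ioc_subset_Icc_self).congr_fun
      (fun x hx => (e1 x hx).symm) measurableSet_Ioc
  · exact i2.congr_fun (fun x hx => (e2 x hx).symm) measurableSet_Ioi

lemma hankel_pos (b φ p : ℝ) (hφ : Real.cos φ < 0) (h0 : 0 ≤ φ) (hπ : φ ≤ Real.pi) (hp : 0 < p) :
    1 / Real.Gamma (1 - p) = (hkH b φ p).im / Real.pi := by
  rw [hkH_pos b φ p hφ h0 hπ hp]
  have h := Real.Gamma_mul_Gamma_one_sub p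
  have hG : Real.Gamma p ≠ 0 := (Real.Gamma_pos_of_pos hp).ne'
  have e : Real.Gamma (1 - p) = Real.pi / Real.sin (Real.pi * p) / Real.Gamma p := by
    rw [← h]; field_simp
  rw [e, mul_comm p]
  simp only [one_div, inv_div, div_eq_mul_inv, mul_inv, inv_inv]
  ring

lemma hankel_zero (b φ : ℝ) (hb : 0 ≤ b) (hφ : Real.cos φ < 0) (h0 : 0 ≤ φ) (hπ : φ ≤ Real.pi) :
    1 / Real.Gamma (1 - 0) = (hkH b φ 0).im / Real.pi := by
  have ht : Tendsto (fun p : ℝ => hkH b φ p) (𝓝[>] 0) (𝓝 (hkH b φ 0)) := by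
    have e : ∀ p, hkH b φ p = ∫ x in Set.Ioi 0, hkA b φ x *
        Complex.exp (-((1 - p : ℝ) : ℂ) * hkZ b φ x) := by
      intro p
      rw [hkA_integral b φ (1 - p) hφ h0, sub_sub_cancel]
    simp_rw [e]
    apply tendsto_integral_filter_of_dominated_convergence (fun x => ‖hkA b φ x‖)
    · refine Eventually.of_forall fun p => Measurable.aestronglyMeasurable ?_
      have := hkA_meas b φ
      have := (hkZ_cont b φ).measurable
      fun_prop
    · have : ∀ᶠ p : ℝ in 𝓝[>] 0, p < 1 :=
        nhdsWithin_le_nhds (eventually_lt_nhds one_pos)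
      filter_upwards [this] with p hp
      refine Eventually.of_forall fun x => ?_
      rw [norm_mul, Complex.norm_exp, ← Complex.ofReal_neg, Complex.re_ofReal_mul, hkZ_re]
      apply mul_le_of_le_one_right (norm_nonneg _)
      rw [Real.exp_le_one_iff]
      have : 0 ≤ b + max (x - φ) 0 := add_nonneg hb (le_max_right _ _)
      nlinarith
    · simpa using hkA_integrable b φ 0 hφ h0 one_pos 0 0
    · refine Eventually.of_forall fun x => ?_
      apply Tendsto.mono_left _ nhdsWithin_le_nhds
      apply Continuous.tendsto
      fun_prop
  have h1 := ((Complex.continuous_im.tendsto _).comp ht).div_const Real.pi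
  have h2 : Tendsto (fun p : ℝ => 1 / Real.Gamma (1 - p)) (𝓝[>] 0) (𝓝 (1 / Real.Gamma (1 - 0))) := by
    apply Tendsto.mono_left _ nhdsWithin_le_nhds
    have hc : ContinuousAt Real.Gamma (1 - 0) :=
      (Real.differentiableAt_Gamma (fun m => by
        have : (0:ℝ) ≤ m := Nat.cast_nonneg m
        intro h; linarith)).continuousAt
    have hs : Tendsto (fun p : ℝ => 1 - p) (𝓝 0) (𝓝 (1 - 0)) :=
      Continuous.tendsto (by fun_prop) 0
    exact tendsto_const_nhds.div (hc.tendsto.comp hs) (by simp)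
  refine tendsto_nhds_unique h2 (h1.congr' ?_)
  filter_upwards [self_mem_nhdsWithin] with p hp
  exact (hankel_pos b φ p hφ h0 hπ hp).symm

lemma hankel_all (b φ : ℝ) (hb : 0 ≤ b) (hφ : Real.cos φ < 0) (h0 : 0 ≤ φ) (hπ : φ ≤ Real.pi)
    (n : ℕ) : ∀ p : ℝ, -(n:ℝ) < p → 1 / Real.Gamma (1 - p) = (hkH b φ p).im / Real.pi := by
  induction n with
  | zero =>
    intro p hp
    exact hankel_pos b φ p hφ h0 hπ (by simpa using hp)
  | succ n ih =>
    intro p hp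
    push_cast at hp
    rcases lt_trichotomy p 0 with h | h | h
    · have h1 := ih (p + 1) (by linarith)
      have h2 := congrArg Complex.im (hkH_rec b φ p hφ)
      rw [hkF_real, ← Complex.ofReal_neg, Complex.ofReal_im, Complex.add_im,
        Complex.im_ofReal_mul] at h2
      have h3 : (hkH b φ p).im = -(hkH b φ (p + 1)).im / p := by
        rw [eq_div_iff h.ne]
        linarith
      have h4 : (hkH b φ (p + 1)).im = 1 / Real.Gamma (1 - (p + 1)) * Real.pi := by
        rw [h1]; field_simp
      rw [h3, h4, show 1 - p = -p + 1 by ring, Real.Gamma_add_one (by linarith),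
        show 1 - (p + 1) = -p by ring]
      have : Real.Gamma (-p) ≠ 0 := (Real.Gamma_pos_of_pos (by linarith)).ne'
      field_simp
    · subst h
      exact hankel_zero b φ hb hφ h0 hπ
    · exact hankel_pos b φ p hφ h0 hπ h

lemma hankel (b φ : ℝ) (hb : 0 ≤ b) (hφ : Real.cos φ < 0) (h0 : 0 ≤ φ) (hπ : φ ≤ Real.pi)
    (w : ℝ) : 1 / Real.Gamma w =
      (∫ x in Set.Ioi 0, hkA b φ x * Complex.exp (-w * hkZ b φ x)).im / Real.pi := by
  rw [hkA_integral b φ w hφ h0]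
  obtain ⟨n, hn⟩ := exists_nat_gt (-(1 - w))
  have := hankel_all b φ hb hφ h0 hπ n (1 - w) (by linarith)
  rwa [sub_sub_cancel] at this

/-- The Laplace transform of the M-Wright function is the Mittag-Leffler function:
for `0 < ν < 1` and `s ≥ 0`, the integral `∫₀^∞ e^(-sz) M_ν(z) dz` converges and
equals `E_ν(-s) = Σ_{n=0}^∞ (-s)ⁿ / Γ(νn + 1)`. -/
theorem mWright_laplace_mittagLeffler (ν s : ℝ) (hν0 : 0 < ν) (hν1 : ν < 1) (hs : 0 ≤ s) :
    IntegrableOn (fun z => Real.exp (-s * z) * mWright ν z) (Set.Ioi 0) ∧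
    ∫ z in Set.Ioi (0:ℝ), Real.exp (-s * z) * mWright ν z
      = ∑' n : ℕ, (-s) ^ n / Real.Gamma (ν * n + 1) := by
  have hpi := Real.pi_pos
  obtain ⟨φ, hφd⟩ : ∃ φ : ℝ, φ = Real.pi / (1 + ν) := ⟨_, rfl⟩
  have hφm : φ * (1 + ν) = Real.pi := by rw [hφd]; field_simp
  have hφ1 : Real.pi / 2 < φ := by nlinarith
  have hφ2 : φ ≤ Real.pi := by nlinarith
  have hφ0 : 0 ≤ φ := by linarith
  have hφ3 : ν * φ < Real.pi / 2 := by nlinarith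
  have hcos : Real.cos φ < 0 := Real.cos_neg_of_pi_div_two_lt_of_lt hφ1 (by linarith)
  have hcos2 : 0 < Real.cos (ν * φ) :=
    Real.cos_pos_of_mem_Ioo ⟨by nlinarith, hφ3⟩
  -- choose the radius
  obtain ⟨b, hb0, hb⟩ : ∃ b : ℝ, 0 ≤ b ∧ 2 * s ≤ Real.exp (ν * b) := by
    refine ⟨2 * s / ν, by positivity, ?_⟩
    rw [mul_div_cancel₀ _ hν0.ne']
    linarith [Real.add_one_le_exp (2 * s)]
  have hmono : ∀ x, Real.exp (ν * b) ≤ Real.exp (ν * (hkZ b φ x).re) := by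
    intro x
    rw [Real.exp_le_exp, hkZ_re]
    have := le_max_right (x - φ) 0
    nlinarith
  refine core (volume.restrict (Set.Ioi 0)) (hkA b φ) (hkZ b φ) (hkA_meas b φ)
    (hkZ_cont b φ).measurable ν s (Real.cos (ν * φ)) (1 / 2) hs hcos2 (by norm_num) (by norm_num)
    (hkA_integrable b φ ν hcos hφ0 hν1) (hankel b φ hb0 hcos hφ0 hφ2) ?_ ?_
  · filter_upwards [ae_restrict_mem measurableSet_Ioi] with x hx
    have hx : 0 < x := hx
    rw [Complex.exp_re, Complex.re_ofReal_mul, Complex.im_ofReal_mul, hkZ_im]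
    have h1 : 1 ≤ Real.exp (ν * (hkZ b φ x).re) :=
      le_trans (Real.one_le_exp (by positivity)) (hmono x)
    have h2 : Real.cos (ν * φ) ≤ Real.cos (ν * min x φ) := by
      apply Real.cos_le_cos_of_nonneg_of_le_pi
      · have : 0 ≤ min x φ := le_min hx.le hφ0
        positivity
      · linarith
      · exact mul_le_mul_of_nonneg_left (min_le_right _ _) hν0.le
    nlinarith
  · refine Eventually.of_forall fun x => ?_
    linarith [hmono x]
end

section
/- Let 0 < ν < 1. Then the M-Wright function is normalized on the half line: ∫₀^∞ M_ν(z) dz = 1. -/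
open MeasureTheory

open Set

lemma mw_frullani (w : ℂ) (hw : 0 < w.re) :
    IntegrableOn (fun u : ℝ => (Complex.exp (-(u:ℂ)) - Complex.exp (-(w * u))) / u) (Ioi (0:ℝ)) ∧
    ∫ u in Ioi (0:ℝ), (Complex.exp (-(u:ℂ)) - Complex.exp (-(w * u))) / u = Complex.log w := by
  set G : ℝ → ℝ → ℂ := fun s u => (w - 1) * Complex.exp ((-(1 + s * (w - 1))) * u) with hG
  set m := min 1 w.re with hm
  have hm0 : 0 < m := lt_min one_pos hw
  have hre : ∀ s ∈ Ioc (0:ℝ) 1, m ≤ (1 + (s:ℂ) * (w - 1)).re := by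
    intro s hs
    have : (1 + (s:ℂ) * (w - 1)).re = (1 - s) * 1 + s * w.re := by
      simp; ring
    rw [this]
    nlinarith [min_le_left 1 w.re, min_le_right 1 w.re, hs.1, hs.2]
  have hint : Integrable (Function.uncurry G)
      ((volume.restrict (Ioc (0:ℝ) 1)).prod (volume.restrict (Ioi (0:ℝ)))) := by
    have hb : Integrable (fun z : ℝ × ℝ => ‖w - 1‖ * Real.exp (-m * z.2))
      ((volume.restrict (Ioc (0:ℝ) 1)).prod (volume.restrict (Ioi (0:ℝ)))) :=
      (integrable_const (‖w-1‖)).mul_prod (integrableOn_exp_mul_Ioi (neg_lt_zero.mpr hm0) 0)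
    refine hb.mono' (Continuous.aestronglyMeasurable (by fun_prop)) ?_
    rw [Measure.prod_restrict]
    refine (ae_restrict_iff' (measurableSet_Ioc.prod measurableSet_Ioi)).mpr (ae_of_all _ ?_)
    rintro ⟨s, u⟩ ⟨hs, hu⟩
    simp only [Function.uncurry, hG, norm_mul, Complex.norm_exp]
    gcongr
    have := hre s hs
    rw [Complex.re_mul_ofReal, Complex.neg_re]
    have hu' : (0:ℝ) < u := hu
    nlinarith
  have hin : ∀ u ∈ Ioi (0:ℝ), ∫ s in Ioc (0:ℝ) 1, G s u =
      (Complex.exp (-(u:ℂ)) - Complex.exp (-(w * u))) / u := by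
    intro u hu
    have hu0 : (u:ℂ) ≠ 0 := by exact_mod_cast (ne_of_gt hu)
    rw [← intervalIntegral.integral_of_le zero_le_one]
    have hd : ∀ s ∈ uIcc (0:ℝ) 1, HasDerivAt
        (fun s : ℝ => -Complex.exp ((-(1 + s * (w - 1))) * u) / u) (G s u) s := by
      intro s _
      have h0 : HasDerivAt (fun s : ℝ => (s:ℂ)) 1 s := Complex.ofRealCLM.hasDerivAt
      have h1 := (((((h0.mul_const (w-1)).const_add 1).neg).mul_const (u:ℂ)).cexp.neg).div_const (u:ℂ)
      refine HasDerivAt.congr_deriv h1 ?_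
      simp only [hG, Pi.neg_apply]
      field_simp
    rw [intervalIntegral.integral_eq_sub_of_hasDerivAt hd
      (Continuous.intervalIntegrable (by fun_prop) _ _)]
    simp only [Complex.ofReal_one, Complex.ofReal_zero]
    ring_nf
  have hout : ∀ s ∈ Ioc (0:ℝ) 1, ∫ u in Ioi (0:ℝ), G s u = (w - 1) / (1 + s * (w - 1)) := by
    intro s hs
    have h1 := hre s hs
    have h2 : (-(1 + (s:ℂ) * (w - 1))).re < 0 := by rw [Complex.neg_re]; linarith
    simp only [hG]
    rw [integral_const_mul, integral_exp_mul_complex_Ioi h2]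
    simp [div_eq_mul_inv, ← inv_neg]
  constructor
  · have := hint.integral_prod_right
    refine (integrableOn_congr_fun (fun u hu => ?_) measurableSet_Ioi).mp this
    exact hin u hu
  · rw [← setIntegral_congr_fun measurableSet_Ioi hin, ← integral_integral_swap hint,
      setIntegral_congr_fun measurableSet_Ioc hout, ← intervalIntegral.integral_of_le zero_le_one]
    have hpos : ∀ s ∈ uIcc (0:ℝ) 1, 0 < (1 + (s:ℂ) * (w - 1)).re := by
      intro s hs
      rw [uIcc_of_le zero_le_one] at hs
      rcases hs.1.eq_or_lt with h | h
      · simp [← h]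
      · exact hm0.trans_le (hre s ⟨h, hs.2⟩)
    have hd : ∀ s ∈ uIcc (0:ℝ) 1, HasDerivAt
        (fun s : ℝ => Complex.log (1 + s * (w - 1))) ((w - 1) / (1 + s * (w - 1))) s := by
      intro s hs
      have h0 : HasDerivAt (fun s : ℝ => (s:ℂ)) 1 s := Complex.ofRealCLM.hasDerivAt
      have h1 := ((h0.mul_const (w-1)).const_add 1).clog_real (Or.inl (hpos s hs))
      convert h1 using 1
      ring
    rw [intervalIntegral.integral_eq_sub_of_hasDerivAt hd]
    · simp
    · refine ContinuousOn.intervalIntegrable (ContinuousOn.div (by fun_prop) (by fun_prop) ?_)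
      intro s hs h
      have := hpos s hs
      rw [h] at this; simp at this

lemma mw_gamma_norm (s b : ℝ) (hs : 0 < s) (hb : 0 < b) :
    IntegrableOn (fun r : ℝ => r ^ (s-1) * Real.exp (-(b * r))) (Ioi 0) := by
  have := integrableOn_rpow_mul_exp_neg_mul_rpow (s := s - 1) (p := 1) (b := b) (by linarith) one_pos hb
  simpa [Real.rpow_one] using this

lemma mw_meas (s : ℝ) (w : ℂ) : Measurable (fun r : ℝ => ((r ^ (s-1) : ℝ) : ℂ) * Complex.exp (-(w * r))) := by
  fun_prop

lemma mw_gamma_int (s : ℝ) (hs : 0 < s) (w : ℂ) (hw : 0 < w.re) :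
    IntegrableOn (fun r : ℝ => ((r ^ (s-1) : ℝ) : ℂ) * Complex.exp (-(w * r))) (Ioi 0) := by
  refine (mw_gamma_norm s w.re hs hw).mono' (mw_meas s w).aestronglyMeasurable ?_
  refine (ae_restrict_iff' measurableSet_Ioi).mpr (ae_of_all _ fun r hr => ?_)
  have hr0 : (0:ℝ) < r := hr
  rw [norm_mul, Complex.norm_exp, Complex.norm_real, Real.norm_of_nonneg (by positivity)]
  simp

lemma mw_gamma_diff (s : ℝ) (hs : 0 < s) : DifferentiableOn ℂ
    (fun w : ℂ => ∫ r in Ioi (0:ℝ), ((r ^ (s-1) : ℝ) : ℂ) * Complex.exp (-(w * r)))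
    {w : ℂ | 0 < w.re} := by
  intro w hw
  have hw' : 0 < w.re := hw
  refine DifferentiableAt.differentiableWithinAt ?_
  refine (hasDerivAt_integral_of_dominated_loc_of_deriv_le
    (μ := volume.restrict (Ioi (0:ℝ)))
    (F := fun w r => ((r ^ (s-1) : ℝ) : ℂ) * Complex.exp (-(w * r)))
    (F' := fun w r => ((r ^ (s-1) : ℝ) : ℂ) * (Complex.exp (-(w * r)) * (-r)))
    (bound := fun r => r ^ (s + 1 - 1) * Real.exp (-(w.re / 2 * r)))
    (Metric.ball_mem_nhds w (half_pos hw')) ?_ (mw_gamma_int s hs w hw') ?_ ?_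
    (mw_gamma_norm (s+1) (w.re/2) (by linarith) (by linarith)) ?_).2.differentiableAt
  · exact .of_forall fun w => (mw_meas s w).aestronglyMeasurable
  · exact Measurable.aestronglyMeasurable (by fun_prop)
  · refine (ae_restrict_iff' measurableSet_Ioi).mpr (ae_of_all _ fun r hr x hx => ?_)
    have hr0 : (0:ℝ) < r := hr
    have h1 : w.re / 2 ≤ x.re := by
      have h2 : ‖x - w‖ < w.re / 2 := by simpa [dist_eq_norm] using hx
      have h3 := (abs_le.mp (Complex.abs_re_le_norm (x - w))).1
      rw [Complex.sub_re] at h3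
      linarith
    rw [norm_mul, norm_mul, Complex.norm_exp, Complex.norm_real, Real.norm_of_nonneg (by positivity), norm_neg,
      Complex.norm_real, Real.norm_of_nonneg hr0.le, show s + 1 - 1 = (s - 1) + 1 by ring,
      Real.rpow_add_one hr0.ne', Complex.neg_re, Complex.re_mul_ofReal]
    rw [mul_assoc, mul_comm (Real.exp _)]
    gcongr
  · refine ae_of_all _ fun r x _ => ?_
    have h1 := (((hasDerivAt_id x).mul_const (r:ℂ)).neg.cexp).const_mul ((r ^ (s-1) : ℝ) : ℂ)
    simpa using h1

lemma mw_gamma (s : ℝ) (hs : 0 < s) (w : ℂ) (hw : 0 < w.re) :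
    ∫ r in Ioi (0:ℝ), ((r ^ (s-1) : ℝ) : ℂ) * Complex.exp (-(w * r)) =
      w ^ (-(s:ℂ)) * Complex.Gamma s := by
  have hopen : IsOpen {w : ℂ | 0 < w.re} := isOpen_lt continuous_const Complex.continuous_re
  have h1 := (mw_gamma_diff s hs).analyticOnNhd hopen
  have h2 : DifferentiableOn ℂ (fun w : ℂ => w ^ (-(s:ℂ)) * Complex.Gamma s) {w : ℂ | 0 < w.re} := by
    intro w hw
    refine DifferentiableAt.differentiableWithinAt ?_
    exact (differentiableAt_id.cpow_const (Or.inl hw)).mul_const _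
  have h3 := h2.analyticOnNhd hopen
  refine h1.eqOn_of_preconnected_of_frequently_eq h3 (z₀ := 1)
    (convex_halfSpace_re_gt 0).isPreconnected (by simp) ?_ hw
  have key : ∀ x : ℝ, 0 < x → ∫ r in Ioi (0:ℝ), ((r ^ (s-1) : ℝ) : ℂ) * Complex.exp (-((x:ℂ) * r)) =
      (x:ℂ) ^ (-(s:ℂ)) * Complex.Gamma s := by
    intro x hx
    have := Complex.integral_cpow_mul_exp_neg_mul_Ioi (a := s) (r := x) (by simpa using hs) hx
    rw [one_div, ← Complex.ofReal_inv, ← Complex.ofReal_cpow (by positivity), Real.inv_rpow hx.le, ← Real.rpow_neg hx.le,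
      Complex.ofReal_cpow hx.le] at this
    rw [← Complex.ofReal_neg, ← this]
    refine setIntegral_congr_fun measurableSet_Ioi fun r hr => ?_
    rw [Complex.ofReal_cpow (le_of_lt hr)]
    simp
  have ht : Filter.Tendsto (fun x : ℝ => (x:ℂ)) (nhdsWithin 1 {1}ᶜ) (nhdsWithin (1:ℂ) {1}ᶜ) := by
    refine tendsto_nhdsWithin_iff.mpr ⟨?_, ?_⟩
    · have := (Complex.continuous_ofReal.tendsto (1:ℝ))
      rw [Complex.ofReal_one] at this
      exact this.mono_left nhdsWithin_le_nhds
    · filter_upwards [self_mem_nhdsWithin] with x hx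
      simpa using hx
  refine ht.frequently (Filter.Eventually.frequently ?_)
  filter_upwards [nhdsWithin_le_nhds (lt_mem_nhds (one_pos : (0:ℝ) < 1))] with x hx
  exact key x hx

lemma mw_young (ν z b : ℝ) (hν1 : ν < 1) (hν0 : 0 < ν) (hz : 0 ≤ z) (hb : 0 < b) :
    ∃ C : ℝ, ∀ r : ℝ, 0 < r → z * r ^ ν ≤ C + b * r := by
  set K := (z / b + 1) ^ (1 - ν)⁻¹ with hK
  have h0 : 0 < z / b + 1 := by positivity
  have hK0 : 0 < K := by positivity
  refine ⟨z * K ^ ν, fun r hr => ?_⟩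
  rcases le_total r K with h | h
  · have : z * r ^ ν ≤ z * K ^ ν := by gcongr
    nlinarith
  · have h1 : z / b + 1 ≤ r ^ (1 - ν) := by
      have : K ^ (1 - ν) ≤ r ^ (1 - ν) := Real.rpow_le_rpow hK0.le h (by linarith)
      rwa [hK, Real.rpow_inv_rpow h0.le (by linarith)] at this
    have h2 : z ≤ b * r ^ (1 - ν) := by
      have : z / b ≤ r ^ (1 - ν) := by linarith
      rwa [div_le_iff₀' hb] at this
    have h3 : r ^ (1 - ν) * r ^ ν = r := by
      rw [← Real.rpow_add hr]; simp
    have h4 : z * r ^ ν ≤ b * r := by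
      calc z * r ^ ν ≤ (b * r ^ (1 - ν)) * r ^ ν := by gcongr
        _ = b * r := by rw [mul_assoc, h3]
    have : 0 ≤ z * K ^ ν := by positivity
    linarith

lemma mw_bound_int (ν z b : ℝ) (hν1 : ν < 1) (hν0 : 0 < ν) (hz : 0 ≤ z) (hb : 0 < b) :
    IntegrableOn (fun r : ℝ => r ^ (ν - 1) * Real.exp (-(b * r)) * Real.exp (z * r ^ ν)) (Ioi 0) := by
  obtain ⟨C, hC⟩ := mw_young ν z (b/2) hν1 hν0 hz (half_pos hb)
  refine ((mw_gamma_norm ν (b/2) hν0 (half_pos hb)).const_mul (Real.exp C)).mono'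
    (Measurable.aestronglyMeasurable (by fun_prop)) ?_
  refine (ae_restrict_iff' measurableSet_Ioi).mpr (ae_of_all _ fun r hr => ?_)
  have hr0 : (0:ℝ) < r := hr
  rw [Real.norm_of_nonneg (by positivity)]
  calc r ^ (ν - 1) * Real.exp (-(b * r)) * Real.exp (z * r ^ ν)
      ≤ r ^ (ν - 1) * Real.exp (-(b * r)) * Real.exp (C + b / 2 * r) := by
        gcongr; exact hC r hr0
    _ = Real.exp C * (r ^ (ν - 1) * Real.exp (-(b / 2 * r))) := by
        rw [Real.exp_add, show -(b / 2 * r) = -(b * r) + b / 2 * r by ring, Real.exp_add]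
        ring

/-- The angle `θ = πν/(1+ν)`. -/
noncomputable def mwAng (ν : ℝ) : ℝ := Real.pi * ν / (1 + ν)

noncomputable def mwOm (ν : ℝ) : ℂ := Complex.exp ((mwAng ν : ℂ) * Complex.I)

noncomputable def mwA (ν : ℝ) : ℂ := Complex.exp (((-mwAng ν : ℝ) : ℂ) * Complex.I)

lemma mwAng_pos (ν : ℝ) (hν0 : 0 < ν) : 0 < mwAng ν := by
  unfold mwAng; have := Real.pi_pos; positivity

lemma mwAng_lt (ν : ℝ) (hν0 : 0 < ν) (hν1 : ν < 1) : mwAng ν < Real.pi / 2 := by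
  unfold mwAng
  rw [div_lt_div_iff₀ (by linarith) two_pos]
  nlinarith [Real.pi_pos]

lemma mwOm_re (ν : ℝ) : (mwOm ν).re = Real.cos (mwAng ν) := by
  rw [mwOm, Complex.exp_ofReal_mul_I_re]

lemma mwA_re (ν : ℝ) : (mwA ν).re = Real.cos (mwAng ν) := by
  rw [mwA, Complex.exp_ofReal_mul_I_re, Real.cos_neg]

lemma mwOm_norm (ν : ℝ) : ‖mwOm ν‖ = 1 := by
  rw [mwOm, Complex.norm_exp_ofReal_mul_I]

lemma mwCos_pos (ν : ℝ) (hν0 : 0 < ν) (hν1 : ν < 1) : 0 < Real.cos (mwAng ν) :=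
  Real.cos_pos_of_mem_Ioo ⟨by linarith [mwAng_pos ν hν0, Real.pi_pos], mwAng_lt ν hν0 hν1⟩

lemma mwOm_log (ν : ℝ) (hν0 : 0 < ν) (hν1 : ν < 1) :
    Complex.log (mwOm ν) = (mwAng ν : ℂ) * Complex.I := by
  have h1 := mwAng_pos ν hν0
  have h2 := mwAng_lt ν hν0 hν1
  have h3 := Real.pi_pos
  rw [mwOm, Complex.log_exp] <;> simp <;> linarith

lemma mwA_log (ν : ℝ) (hν0 : 0 < ν) (hν1 : ν < 1) :
    Complex.log (mwA ν) = ((-mwAng ν : ℝ) : ℂ) * Complex.I := by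
  have h1 := mwAng_pos ν hν0
  have h2 := mwAng_lt ν hν0 hν1
  have h3 := Real.pi_pos
  rw [mwA, Complex.log_exp] <;> simp <;> linarith

lemma mw_term (ν : ℝ) (hν0 : 0 < ν) (hν1 : ν < 1) (n : ℕ) :
    (mwOm ν ^ (n+1) * (mwA ν ^ (-((ν * (n+1) : ℝ) : ℂ)) * Complex.Gamma ((ν * (n+1) : ℝ) : ℂ))).im =
      Real.pi / Real.Gamma (-(ν * n) + 1 - ν) := by
  have hA : mwA ν ≠ 0 := Complex.exp_ne_zero _
  set s : ℝ := ν * (n+1) with hs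
  have hs0 : 0 < s := by positivity
  have e1 : mwOm ν ^ (n+1) * mwA ν ^ (-(s : ℂ)) = Complex.exp (((Real.pi * s : ℝ) : ℂ) * Complex.I) := by
    rw [Complex.cpow_def_of_ne_zero hA, mwA_log ν hν0 hν1, mwOm, ← Complex.exp_nat_mul, ← Complex.exp_add]
    congr 1
    have : (n + 1 : ℝ) * mwAng ν + mwAng ν * s = Real.pi * s := by
      rw [hs, mwAng]; field_simp
    rw [← this]; push_cast; ring
  rw [← mul_assoc, e1, Complex.Gamma_ofReal, Complex.im_mul_ofReal, Complex.exp_ofReal_mul_I_im]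
  have h2 := Real.Gamma_mul_Gamma_one_sub s
  have h3 : -(ν * n) + 1 - ν = 1 - s := by rw [hs]; ring
  rw [h3]
  have hG : Real.Gamma s ≠ 0 := (Real.Gamma_pos_of_pos hs0).ne'
  by_cases hsin : Real.sin (Real.pi * s) = 0
  · rw [hsin, div_zero] at h2
    have h4 : Real.Gamma (1 - s) = 0 := by
      rcases mul_eq_zero.mp h2 with h | h
      · exact absurd h hG
      · exact h
    rw [hsin, h4]; simp
  · rw [eq_div_iff hsin] at h2
    have h4 : Real.Gamma (1 - s) ≠ 0 := by
      intro h; rw [h] at h2; simp at h2; exact Real.pi_ne_zero h2.symm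
    rw [eq_div_iff h4]; linarith

lemma mw_norm_exp_le (ν z x : ℝ) (hx : 0 ≤ x) :
    ‖Complex.exp (-(z * mwOm ν * x))‖ ≤ Real.exp (|z| * x) := by
  refine (Complex.norm_exp_le_exp_norm _).trans (Real.exp_le_exp.mpr ?_)
  rw [norm_neg, norm_mul, norm_mul, mwOm_norm, Complex.norm_real, Complex.norm_real,
    Real.norm_of_nonneg hx, mul_one, Real.norm_eq_abs]

noncomputable def mwT (ν z r : ℝ) : ℂ :=
  ((r ^ (ν - 1) : ℝ) : ℂ) * Complex.exp (-(mwA ν * r)) * mwOm ν *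
    Complex.exp (-(z * mwOm ν * ((r ^ ν : ℝ) : ℂ)))

lemma mwT_int (ν z : ℝ) (hν0 : 0 < ν) (hν1 : ν < 1) : IntegrableOn (mwT ν z) (Ioi 0) := by
  refine (mw_bound_int ν |z| _ hν1 hν0 (abs_nonneg z) (mwCos_pos ν hν0 hν1)).mono'
    (Measurable.aestronglyMeasurable (by unfold mwT; fun_prop)) ?_
  refine (ae_restrict_iff' measurableSet_Ioi).mpr (ae_of_all _ fun r hr => ?_)
  have hr0 : (0:ℝ) < r := hr
  rw [mwT, norm_mul, norm_mul, norm_mul, mwOm_norm, mul_one, Complex.norm_exp, Complex.norm_real,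
    Real.norm_of_nonneg (by positivity), Complex.neg_re, Complex.re_mul_ofReal, mwA_re]
  gcongr
  exact mw_norm_exp_le ν z _ (by positivity)

lemma mw_series (ν z : ℝ) (hν0 : 0 < ν) (hν1 : ν < 1) :
    mWright ν z = (1 / Real.pi) * (∫ r in Ioi (0:ℝ), mwT ν z r).im := by
  have hc := mwCos_pos ν hν0 hν1
  have hrp : ∀ (r : ℝ), 0 < r → ∀ n : ℕ, r ^ (ν * (n+1) - 1) = r ^ (ν - 1) * (r ^ ν) ^ n := by
    intro r hr n
    rw [← Real.rpow_natCast, ← Real.rpow_mul hr.le, ← Real.rpow_add hr]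
    congr 1; ring
  have hsum := hasSum_integral_of_dominated_convergence (μ := volume.restrict (Ioi (0:ℝ)))
    (F := fun (n : ℕ) (r : ℝ) => (((-z) ^ n / n.factorial : ℝ) : ℂ) * (mwOm ν ^ (n+1) *
      (((r ^ (ν * (n+1) - 1) : ℝ) : ℂ) * Complex.exp (-(mwA ν * r)))))
    (f := mwT ν z)
    (fun n r => r ^ (ν - 1) * Real.exp (-(Real.cos (mwAng ν) * r)) *
      ((|z| * r ^ ν) ^ n / n.factorial)) ?_ ?_ ?_ ?_ ?_
  · have h2 := (Complex.hasSum_im hsum).mul_left (1 / Real.pi)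
    rw [← h2.tsum_eq, mWright]
    refine tsum_congr fun n => ?_
    rw [integral_const_mul, integral_const_mul,
      mw_gamma (ν * (n+1)) (by positivity) (mwA ν) (by rw [mwA_re]; exact hc),
      Complex.im_ofReal_mul, mw_term ν hν0 hν1 n]
    have := Real.pi_ne_zero
    field_simp
  · intro n
    exact Measurable.aestronglyMeasurable (by fun_prop)
  · intro n
    refine (ae_restrict_iff' measurableSet_Ioi).mpr (ae_of_all _ fun r hr => ?_)
    have hr0 : (0:ℝ) < r := hr
    rw [norm_mul, norm_mul, norm_mul, norm_pow, mwOm_norm, one_pow, one_mul, Complex.norm_exp,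
      Complex.norm_real, Complex.norm_real, Real.norm_of_nonneg (by positivity : 0 ≤ r ^ (ν * (n+1) - 1)),
      Complex.neg_re, Complex.re_mul_ofReal, mwA_re, hrp r hr0 n, norm_div, norm_pow, norm_neg,
      Real.norm_eq_abs, mul_pow, Real.norm_of_nonneg (by positivity : (0:ℝ) ≤ n.factorial)]
    apply le_of_eq; ring
  · refine ae_of_all _ fun r => ?_
    exact (Real.summable_pow_div_factorial _).mul_left _
  · refine (mw_bound_int ν |z| _ hν1 hν0 (abs_nonneg z) hc).congr (ae_of_all _ fun r => ?_)
    simp only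
    rw [tsum_mul_left, Real.exp_eq_exp_ℝ, NormedSpace.exp_eq_tsum_div]
  · refine (ae_restrict_iff' measurableSet_Ioi).mpr (ae_of_all _ fun r hr => ?_)
    have hr0 : (0:ℝ) < r := hr
    have h := (NormedSpace.expSeries_div_hasSum_exp (-(z * mwOm ν * ((r ^ ν : ℝ) : ℂ)))).mul_left
      (((r ^ (ν - 1) : ℝ) : ℂ) * Complex.exp (-(mwA ν * r)) * mwOm ν)
    rw [← Complex.exp_eq_exp_ℂ] at h
    have hfun : (fun (n : ℕ) => (((-z) ^ n / n.factorial : ℝ) : ℂ) * (mwOm ν ^ (n+1) *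
        (((r ^ (ν * (n+1) - 1) : ℝ) : ℂ) * Complex.exp (-(mwA ν * r))))) = fun n : ℕ =>
        ((r ^ (ν - 1) : ℝ) : ℂ) * Complex.exp (-(mwA ν * r)) * mwOm ν *
          ((-(z * mwOm ν * ((r ^ ν : ℝ) : ℂ))) ^ n / n.factorial) := by
      funext n
      rw [hrp r hr0 n]
      push_cast
      ring
    rw [hfun]
    exact h

lemma mw_vanish (ν z : ℝ) (hν0 : 0 < ν) (hν1 : ν < 1) (hz : 0 < z) :
    IntegrableOn (fun r : ℝ => Complex.exp (-(mwOm ν * ((r ^ ν : ℝ) : ℂ))) * ((r ^ (ν - 1) : ℝ) : ℂ) *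
      mwOm ν * Complex.exp (-(z * mwOm ν * ((r ^ ν : ℝ) : ℂ)))) (Ioi 0) ∧
    (∫ r in Ioi (0:ℝ), Complex.exp (-(mwOm ν * ((r ^ ν : ℝ) : ℂ))) * ((r ^ (ν - 1) : ℝ) : ℂ) *
      mwOm ν * Complex.exp (-(z * mwOm ν * ((r ^ ν : ℝ) : ℂ)))).im = 0 := by
  have hc := mwCos_pos ν hν0 hν1
  have hO : mwOm ν ≠ 0 := Complex.exp_ne_zero _
  have hνc : (ν : ℂ) ≠ 0 := by exact_mod_cast hν0.ne'
  have hre : (-((z + 1 : ℝ) * mwOm ν)).re < 0 := by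
    rw [Complex.neg_re, Complex.re_ofReal_mul, mwOm_re]
    have : 0 < (z + 1) * Real.cos (mwAng ν) := by positivity
    linarith
  set g : ℝ → ℂ := fun u => mwOm ν / ν * Complex.exp (-((z + 1 : ℝ) * mwOm ν) * u) with hg
  have hgi : IntegrableOn g (Ioi 0) := (integrableOn_exp_mul_complex_Ioi hre 0).const_mul _
  have heq : ∀ r : ℝ, Complex.exp (-(mwOm ν * ((r ^ ν : ℝ) : ℂ))) * ((r ^ (ν - 1) : ℝ) : ℂ) *
      mwOm ν * Complex.exp (-(z * mwOm ν * ((r ^ ν : ℝ) : ℂ))) = (ν * r ^ (ν - 1)) • g (r ^ ν) := by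
    intro r
    have e : Complex.exp (-((z + 1 : ℝ) * mwOm ν) * ((r ^ ν : ℝ) : ℂ)) =
        Complex.exp (-(mwOm ν * ((r ^ ν : ℝ) : ℂ))) * Complex.exp (-(z * mwOm ν * ((r ^ ν : ℝ) : ℂ))) := by
      rw [← Complex.exp_add]; congr 1; push_cast; ring
    simp only [hg, Complex.real_smul]
    rw [e]; push_cast; field_simp
  simp only [heq]
  constructor
  · have := (integrableOn_Ioi_comp_rpow_iff g hν0.ne').mpr hgi
    rwa [abs_of_pos hν0] at this
  · rw [integral_comp_rpow_Ioi_of_pos hν0]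
    simp only [hg]
    rw [integral_const_mul, integral_exp_mul_complex_Ioi hre]
    have hz1 : ((z + 1 : ℝ) : ℂ) ≠ 0 := by exact_mod_cast (by linarith : z + 1 ≠ 0)
    have : mwOm ν / ν * (-Complex.exp (-((z + 1 : ℝ) * mwOm ν) * ((0:ℝ):ℂ)) / -((z + 1 : ℝ) * mwOm ν)) =
        ((1 / (ν * (z + 1)) : ℝ) : ℂ) := by
      rw [neg_div_neg_eq]
      simp only [Complex.ofReal_zero, mul_zero, Complex.exp_zero]
      rw [Complex.ofReal_div, Complex.ofReal_mul, Complex.ofReal_one]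
      field_simp
    rw [this, Complex.ofReal_im]

noncomputable def mwD (ν r : ℝ) : ℂ :=
  Complex.exp (-(mwA ν * r)) - Complex.exp (-(mwOm ν * ((r ^ ν : ℝ) : ℂ)))

lemma mw_cut : IntegrableOn (fun r : ℝ => (Real.exp (-r) - if r < 1 then 1 else 0) / r) (Ioi 0) := by
  have hm : Measurable (fun r : ℝ => (Real.exp (-r) - if r < 1 then 1 else 0) / r) := by
    refine Measurable.div (Measurable.sub (by fun_prop) ?_) measurable_id
    exact Measurable.ite measurableSet_Iio measurable_const measurable_const
  have hb : IntegrableOn (fun r : ℝ => Real.exp 1 * Real.exp (-1 * r)) (Ioi 0) :=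
    (integrableOn_exp_mul_Ioi (by norm_num) 0).const_mul _
  refine hb.mono' hm.aestronglyMeasurable ?_
  refine (ae_restrict_iff' measurableSet_Ioi).mpr (ae_of_all _ fun r hr => ?_)
  have hr0 : (0:ℝ) < r := hr
  rw [norm_div, Real.norm_eq_abs, Real.norm_of_nonneg hr0.le, div_le_iff₀ hr0, ← Real.exp_add]
  split_ifs with h
  · have h1 : Real.exp (-r) ≤ 1 := Real.exp_le_one_iff.mpr (by linarith)
    have h2 := Real.add_one_le_exp (-r)
    have h3 : 1 ≤ Real.exp (1 + -1 * r) := Real.one_le_exp (by linarith)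
    rw [abs_of_nonpos (by linarith)]
    nlinarith
  · rw [sub_zero, abs_of_pos (Real.exp_pos _)]
    have h3 : Real.exp (-r) ≤ Real.exp (1 + -1 * r) := Real.exp_le_exp.mpr (by linarith)
    have h4 := Real.exp_pos (1 + -1 * r)
    push Not at h
    nlinarith

lemma mw_rpow_div (ν r : ℝ) (hr : 0 < r) : r ^ (ν - 1) = r ^ ν / r := Real.rpow_sub_one hr.ne' ν

lemma mw_mid (ν : ℝ) (hν0 : 0 < ν) :
    IntegrableOn (fun r : ℝ => (Real.exp (-r) - Real.exp (-(r ^ ν))) / r) (Ioi 0) := by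
  have h1 := mw_cut
  have h2 := (integrableOn_Ioi_comp_rpow_iff
    (fun r : ℝ => (Real.exp (-r) - if r < 1 then 1 else 0) / r) hν0.ne').mpr h1
  have h3 := h1.sub (h2.const_mul ν⁻¹)
  refine (integrableOn_congr_fun (fun r hr => ?_) measurableSet_Ioi).mp h3
  have hr0 : (0:ℝ) < r := hr
  have hrn : (0:ℝ) < r ^ ν := by positivity
  have hiff : (r ^ ν < 1) ↔ r < 1 := Real.rpow_lt_one_iff' hr0.le hν0
  simp only [Pi.sub_apply, smul_eq_mul, hiff, abs_of_pos hν0]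
  rw [mw_rpow_div ν r hr0]
  field_simp
  ring

lemma mw_D (ν : ℝ) (hν0 : 0 < ν) (hν1 : ν < 1) :
    IntegrableOn (fun r : ℝ => mwD ν r / r) (Ioi 0) ∧
    (∫ r in Ioi (0:ℝ), mwD ν r / r).im = Real.pi := by
  have hc := mwCos_pos ν hν0 hν1
  obtain ⟨i1, v1⟩ := mw_frullani (mwA ν) (by rw [mwA_re]; exact hc)
  obtain ⟨i3, v3⟩ := mw_frullani (mwOm ν) (by rw [mwOm_re]; exact hc)
  have i2 : IntegrableOn (fun r : ℝ => (((Real.exp (-r) - Real.exp (-(r ^ ν))) / r : ℝ) : ℂ)) (Ioi 0) :=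
    (mw_mid ν hν0).ofReal
  have i3' := (integrableOn_Ioi_comp_rpow_iff _ hν0.ne').mpr i3
  have v3' := integral_comp_rpow_Ioi (fun u : ℝ => (Complex.exp (-(u:ℂ)) - Complex.exp (-(mwOm ν * u))) / u) hν0.ne'
  rw [v3] at v3'
  have i3'' := i3'.const_mul (ν⁻¹ : ℂ)
  have heq : ∀ r ∈ Ioi (0:ℝ), (((Real.exp (-r) - Real.exp (-(r ^ ν))) / r : ℝ) : ℂ)
      - (Complex.exp (-(r:ℂ)) - Complex.exp (-(mwA ν * r))) / r
      + (ν⁻¹ : ℂ) * ((|ν| * r ^ (ν - 1)) • ((Complex.exp (-((r ^ ν : ℝ):ℂ)) -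
          Complex.exp (-(mwOm ν * ((r ^ ν : ℝ):ℂ)))) / ((r ^ ν : ℝ):ℂ))) = mwD ν r / r := by
    intro r hr
    have hr0 : (0:ℝ) < r := hr
    have hrc : (r:ℂ) ≠ 0 := by exact_mod_cast hr0.ne'
    have hνc : (ν : ℂ) ≠ 0 := by exact_mod_cast hν0.ne'
    have hrn : ((r ^ ν : ℝ) : ℂ) ≠ 0 := by
      have : (0:ℝ) < r ^ ν := by positivity
      exact_mod_cast this.ne'
    rw [mw_rpow_div ν r hr0, abs_of_pos hν0, Complex.real_smul, mwD, Complex.ofReal_mul,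
      Complex.ofReal_div, Complex.ofReal_div, Complex.ofReal_sub, Complex.ofReal_exp,
      Complex.ofReal_exp, Complex.ofReal_neg, Complex.ofReal_neg]
    field_simp
    ring
  have itot := (i2.sub i1).add i3''
  constructor
  · exact (integrableOn_congr_fun (fun r hr => heq r hr) measurableSet_Ioi).mp itot
  · rw [← setIntegral_congr_fun measurableSet_Ioi heq]
    rw [integral_add (by exact i2.sub i1) i3'', integral_sub i2 i1, v1, integral_const_mul, v3',
      integral_complex_ofReal, mwOm_log ν hν0 hν1, mwA_log ν hν0 hν1]
    have : (ν⁻¹ : ℂ) * (mwAng ν * Complex.I) = ((ν⁻¹ * mwAng ν : ℝ) : ℂ) * Complex.I := by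
      push_cast; ring
    rw [this]
    simp only [Complex.add_im, Complex.sub_im, Complex.re_ofReal_mul, Complex.im_ofReal_mul, Complex.I_im]
    rw [Complex.ofReal_im, mwAng]
    field_simp
    ring

noncomputable def mwF (ν z r : ℝ) : ℂ :=
  mwD ν r * ((r ^ (ν - 1) : ℝ) : ℂ) * mwOm ν * Complex.exp (-(z * mwOm ν * ((r ^ ν : ℝ) : ℂ)))

lemma mw_repr (ν z : ℝ) (hν0 : 0 < ν) (hν1 : ν < 1) (hz : 0 < z) :
    mWright ν z = (1 / Real.pi) * (∫ r in Ioi (0:ℝ), mwF ν z r).im := by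
  obtain ⟨i, v⟩ := mw_vanish ν z hν0 hν1 hz
  have h : ∀ r, mwF ν z r = mwT ν z r - Complex.exp (-(mwOm ν * ((r ^ ν : ℝ) : ℂ))) * ((r ^ (ν - 1) : ℝ) : ℂ) *
      mwOm ν * Complex.exp (-(z * mwOm ν * ((r ^ ν : ℝ) : ℂ))) := by
    intro r; rw [mwF, mwT, mwD]; ring
  simp only [h]
  rw [integral_sub (mwT_int ν z hν0 hν1) i, Complex.sub_im, v, sub_zero, mw_series ν z hν0 hν1]

lemma mwF_inner (ν r : ℝ) (hν0 : 0 < ν) (hν1 : ν < 1) (hr : 0 < r) :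
    IntegrableOn (fun z => mwF ν z r) (Ioi 0) ∧ ∫ z in Ioi (0:ℝ), mwF ν z r = mwD ν r / r ∧
    ∫ z in Ioi (0:ℝ), ‖mwF ν z r‖ = (Real.cos (mwAng ν))⁻¹ * ‖mwD ν r / r‖ := by
  have hc := mwCos_pos ν hν0 hν1
  have hrn : (0:ℝ) < r ^ ν := by positivity
  have hrnc : ((r ^ ν : ℝ) : ℂ) ≠ 0 := by exact_mod_cast hrn.ne'
  have hrc : (r:ℂ) ≠ 0 := by exact_mod_cast hr.ne'
  have hO : mwOm ν ≠ 0 := Complex.exp_ne_zero _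
  have hre : (-(mwOm ν * ((r ^ ν : ℝ) : ℂ))).re = -(Real.cos (mwAng ν) * r ^ ν) := by
    rw [Complex.neg_re, Complex.re_mul_ofReal, mwOm_re]
  have hneg : -(Real.cos (mwAng ν) * r ^ ν) < 0 := by
    have : 0 < Real.cos (mwAng ν) * r ^ ν := by positivity
    linarith
  have h : ∀ z : ℝ, mwF ν z r = mwD ν r * ((r ^ (ν - 1) : ℝ) : ℂ) * mwOm ν *
      Complex.exp (-(mwOm ν * ((r ^ ν : ℝ) : ℂ)) * z) := by
    intro z; rw [mwF]; congr 2; ring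
  have hn : ∀ z : ℝ, ‖mwF ν z r‖ = ‖mwD ν r‖ * r ^ (ν - 1) *
      Real.exp (-(Real.cos (mwAng ν) * r ^ ν) * z) := by
    intro z
    rw [h, norm_mul, norm_mul, norm_mul, mwOm_norm, Complex.norm_exp, Complex.re_mul_ofReal, hre,
      Complex.norm_real, Real.norm_of_nonneg (by positivity), mul_one]
  refine ⟨?_, ?_, ?_⟩
  · simp only [h]
    exact (integrableOn_exp_mul_complex_Ioi (by rw [hre]; exact hneg) 0).const_mul _
  · simp only [h]
    rw [integral_const_mul, integral_exp_mul_complex_Ioi (by rw [hre]; exact hneg), neg_div_neg_eq,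
      mw_rpow_div ν r hr, Complex.ofReal_div]
    simp only [Complex.ofReal_zero, mul_zero, Complex.exp_zero]
    field_simp
  · simp only [hn]
    rw [integral_const_mul, integral_exp_mul_Ioi hneg, neg_div_neg_eq, mw_rpow_div ν r hr, norm_div,
      Complex.norm_real, Real.norm_of_nonneg hr.le]
    simp only [mul_zero, Real.exp_zero]
    field_simp

/-- For `0 < ν < 1` the M-Wright function is normalized on the half line:
`∫₀^∞ M_ν(z) dz = 1`. -/
theorem mWright_normalized (ν : ℝ) (hν0 : 0 < ν) (hν1 : ν < 1) :
    ∫ z in Set.Ioi (0:ℝ), mWright ν z = 1 := by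
  obtain ⟨iD, vD⟩ := mw_D ν hν0 hν1
  have hint : Integrable (Function.uncurry (mwF ν))
      ((volume.restrict (Ioi (0:ℝ))).prod (volume.restrict (Ioi (0:ℝ)))) := by
    have hm : Measurable (Function.uncurry (mwF ν)) := by
      unfold Function.uncurry mwF mwD; fun_prop
    rw [integrable_prod_iff' hm.aestronglyMeasurable]
    constructor
    · exact (ae_restrict_iff' measurableSet_Ioi).mpr (ae_of_all _ fun r hr =>
        (mwF_inner ν r hν0 hν1 hr).1)
    · exact (integrableOn_congr_fun (fun r hr => ((mwF_inner ν r hν0 hν1 hr).2.2).symm)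
        measurableSet_Ioi).mp (iD.norm.const_mul _)
  rw [setIntegral_congr_fun measurableSet_Ioi (fun z hz => mw_repr ν z hν0 hν1 hz), integral_const_mul]
  have him : ∫ z in Ioi (0:ℝ), (∫ r in Ioi (0:ℝ), mwF ν z r).im =
      (∫ z in Ioi (0:ℝ), ∫ r in Ioi (0:ℝ), mwF ν z r).im :=
    integral_im (𝕜 := ℂ) hint.integral_prod_left
  rw [him, integral_integral_swap hint,
    setIntegral_congr_fun measurableSet_Ioi (fun r hr => (mwF_inner ν r hν0 hν1 hr).2.1), vD]
  exact one_div_mul_cancel Real.pi_ne_zero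
end

section
/- Let 0 < ν < 1. Then the M-Wright function is nonnegative on the half line: M_ν(z) ≥ 0 for every z ≥ 0. Consequently the fundamental solution G_C(x,t;ν) = (1/(2 t^ν)) M_ν(|x|/t^ν) of the Cauchy problem for the time-fractional diffusion-wave equation is a probability density in x for each fixed t > 0. -/
open MeasureTheory

open Filter Topology

namespace MW

/-- Coefficients of `(1-x)^(a-1)`. -/
noncomputable def c (a : ℝ) (N : ℕ) : ℝ := ∏ i ∈ Finset.range N, (((i:ℝ) + 1 - a) / (i + 1))

lemma c_zero_right (a : ℝ) : c a 0 = 1 := by simp [c]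

lemma c_succ (a : ℝ) (N : ℕ) : c a (N+1) = c a N * (((N:ℝ) + 1 - a) / (N + 1)) := by
  unfold c; rw [Finset.prod_range_succ]

lemma c_zero_left (N : ℕ) : c 0 N = 1 := by
  induction N with
  | zero => simp [c]
  | succ n ih => rw [c_succ, ih]; field_simp; simp

lemma c_shift (a : ℝ) (N : ℕ) : c a (N+1) = (1 - a) / (N+1) * c (a - 1) N := by
  induction N with
  | zero => simp [c]
  | succ n ih =>
    rw [c_succ, ih, c_succ]; push_cast; field_simp; ring

lemma c_eq_choose (a : ℝ) (N : ℕ) : c a N = (-1)^N * Ring.choose (a - 1) N := by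
  rw [Ring.choose_eq_smul]
  induction N with
  | zero => simp [c]
  | succ n ih =>
    rw [c_succ, ih, descPochhammer_succ_right, Polynomial.smeval_mul]
    simp only [smul_eq_mul, Nat.factorial_succ]
    push_cast
    simp [Polynomial.smeval_natCast]
    have := Nat.factorial_ne_zero n
    field_simp
    ring

lemma c_nonneg {a : ℝ} (h : a ≤ 1) (N : ℕ) : 0 ≤ c a N := by
  apply Finset.prod_nonneg
  intro i _
  apply div_nonneg
  · have : (0:ℝ) ≤ i := by positivity
    linarith
  · positivity

/-- Power series of `(1-x)^(a-1)`. -/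
noncomputable def G (a : ℝ) : PowerSeries ℝ := PowerSeries.mk (c a)

lemma G_mul (a b : ℝ) : G a * G b = G (a + b - 1) := by
  ext n
  rw [PowerSeries.coeff_mul]
  simp only [G, PowerSeries.coeff_mk, c_eq_choose]
  rw [show a + b - 1 - 1 = (a - 1) + (b - 1) by ring, Ring.add_choose_eq n (Commute.all _ _),
    Finset.mul_sum]
  apply Finset.sum_congr rfl
  intro ij hij
  rw [Finset.HasAntidiagonal.mem_antidiagonal] at hij
  rw [← hij, pow_add]; ring

lemma G_one : G 1 = 1 := by
  ext n
  simp only [G, PowerSeries.coeff_mk, PowerSeries.coeff_one]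
  cases n with
  | zero => simp [c]
  | succ n => simp [c_shift]

lemma G_pow (ν : ℝ) (j : ℕ) : G (ν + 1) ^ j = G (ν * j + 1) := by
  induction j with
  | zero => simp [G_one]
  | succ n ih => rw [pow_succ, ih, G_mul]; congr 1; push_cast; ring

/-- power series of `1-(1-x)^ν`. -/
noncomputable def F (ν : ℝ) : PowerSeries ℝ := 1 - G (ν + 1)

noncomputable def P (ν : ℝ) (k : ℕ) : PowerSeries ℝ := F ν ^ k * G 0

noncomputable def p (ν : ℝ) (k N : ℕ) : ℝ := PowerSeries.coeff N (P ν k)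

lemma p_eq_sum (ν : ℝ) (k N : ℕ) :
    p ν k N = ∑ j ∈ Finset.range (k+1), (-1)^j * (k.choose j) * c (ν * j) N := by
  have : P ν k = ∑ j ∈ Finset.range (k+1), PowerSeries.C ((-1)^j * (k.choose j : ℝ)) * G (ν * j) := by
    unfold P F
    rw [sub_eq_add_neg, add_comm, add_pow, Finset.sum_mul]
    apply Finset.sum_congr rfl
    intro j _
    rw [neg_pow, G_pow, one_pow, mul_one]
    have h := G_mul (ν * j + 1) 0
    rw [show ν * j + 1 + 0 - 1 = ν * j by ring] at h
    rw [← h]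
    simp
    ring
  unfold p
  rw [this, map_sum]
  apply Finset.sum_congr rfl
  intro j _
  rw [PowerSeries.coeff_C_mul]
  simp [G]

/-- nonnegative coefficients -/
def NN (f : PowerSeries ℝ) : Prop := ∀ n, 0 ≤ PowerSeries.coeff n f

lemma NN.mul {f g : PowerSeries ℝ} (hf : NN f) (hg : NN g) : NN (f * g) := by
  intro n
  rw [PowerSeries.coeff_mul]
  exact Finset.sum_nonneg fun i _ => mul_nonneg (hf _) (hg _)

lemma NN.pow {f : PowerSeries ℝ} (hf : NN f) (k : ℕ) : NN (f ^ k) := by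
  induction k with
  | zero => intro n; rw [pow_zero, PowerSeries.coeff_one]; split_ifs <;> simp
  | succ n ih => rw [pow_succ]; exact ih.mul hf

lemma NN_G {a : ℝ} (h : a ≤ 1) : NN (G a) := by
  intro n; simpa [G] using c_nonneg h n

lemma NN_F {ν : ℝ} (h0 : 0 < ν) (h1 : ν < 1) : NN (F ν) := by
  intro n
  cases n with
  | zero => simp [F, G, c]
  | succ n =>
    simp only [F, G, map_sub, PowerSeries.coeff_mk, PowerSeries.coeff_one]
    rw [c_shift]
    have h := c_nonneg h1.le n
    have : (1 - (ν + 1)) / ((n:ℝ) + 1) * c (ν + 1 - 1) n = - (ν / (n+1) * c ν n) := by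
      rw [show ν + 1 - 1 = ν by ring]; ring
    rw [this]
    simp
    positivity

lemma p_nonneg {ν : ℝ} (h0 : 0 < ν) (h1 : ν < 1) (k N : ℕ) : 0 ≤ p ν k N :=
  ((NN_F h0 h1).pow k).mul (NN_G (by norm_num)) N

lemma p_antitone {ν : ℝ} (h0 : 0 < ν) (h1 : ν < 1) (N : ℕ) : Antitone (fun k => p ν k N) := by
  apply antitone_nat_of_succ_le
  intro k
  have : P ν k - P ν (k+1) = F ν ^ k * G ν := by
    have h := G_mul (ν + 1) 0
    rw [show ν + 1 + 0 - 1 = ν by ring] at h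
    rw [← h]
    unfold P
    rw [pow_succ]
    nth_rw 3 [F]
    ring
  have h := ((NN_F h0 h1).pow k).mul (NN_G h1.le) N
  rw [← this, map_sub] at h
  unfold p
  linarith

/-- truncated evaluation -/
noncomputable def ev (N : ℕ) (r : ℝ) (f : PowerSeries ℝ) : ℝ :=
  ∑ n ∈ Finset.range (N+1), PowerSeries.coeff n f * r ^ n

lemma ev_mul_le {f g : PowerSeries ℝ} (hf : NN f) (hg : NN g) (N : ℕ) {r : ℝ} (hr : 0 ≤ r) :
    ev N r (f * g) ≤ ev N r f * ev N r g := by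
  unfold ev
  rw [Finset.sum_mul_sum, ← Finset.sum_product']
  simp_rw [PowerSeries.coeff_mul, Finset.sum_mul]
  rw [Finset.sum_sigma']
  set φ : ℕ × ℕ → ℝ := fun ij =>
    PowerSeries.coeff ij.1 f * r ^ ij.1 * (PowerSeries.coeff ij.2 g * r ^ ij.2) with hφ
  set S := (Finset.range (N+1)).sigma fun n => Finset.HasAntidiagonal.antidiagonal n with hS
  have hinj : Set.InjOn (fun x : (_ : ℕ) × (ℕ × ℕ) => x.2) S := by
    rintro ⟨n, a, b⟩ h ⟨n', a', b'⟩ h' heq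
    simp [hS] at h h' heq
    obtain ⟨rfl, rfl⟩ := heq
    obtain ⟨_, rfl⟩ := h
    obtain ⟨_, rfl⟩ := h'
    rfl
  calc _ = ∑ x ∈ S, φ x.2 := by
        apply Finset.sum_congr rfl
        rintro ⟨n, a, b⟩ h
        simp [hS] at h
        obtain ⟨_, rfl⟩ := h
        simp only [hφ, pow_add]; ring
    _ = ∑ y ∈ S.image (fun x => x.2), φ y := (Finset.sum_image hinj).symm
    _ ≤ _ := by
        apply Finset.sum_le_sum_of_subset_of_nonneg
        · rintro ⟨a, b⟩ h
          simp [hS] at h ⊢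
          omega
        · rintro ⟨a, b⟩ _ _
          exact mul_nonneg (mul_nonneg (hf _) (by positivity)) (mul_nonneg (hg _) (by positivity))

lemma ev_pow_le {f : PowerSeries ℝ} (hf : NN f) (N : ℕ) {r : ℝ} (hr : 0 ≤ r) (k : ℕ) :
    ev N r (f ^ k) ≤ ev N r f ^ k := by
  induction k with
  | zero => simp [ev, PowerSeries.coeff_one]
  | succ n ih =>
    rw [pow_succ, pow_succ]
    refine (ev_mul_le (hf.pow n) hf N hr).trans ?_
    apply mul_le_mul_of_nonneg_right ih
    exact Finset.sum_nonneg fun i _ => mul_nonneg (hf _) (by positivity)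

lemma ev_F_le {ν : ℝ} (h0 : 0 < ν) (h1 : ν < 1) (N : ℕ) {r : ℝ} (hr : 0 ≤ r) (hr1 : r < 1) :
    ev N r (F ν) ≤ 1 - (1 - r) ^ ν := by
  have h := (Real.one_add_rpow_hasFPowerSeriesOnBall_zero (a := ν)).hasSum (y := -r) (by
    rw [← ENNReal.ofReal_one, Metric.eball_ofReal]
    simp [abs_of_nonneg hr, hr1])
  have h2 : HasSum (fun n => PowerSeries.coeff n (F ν) * r ^ n) (1 - (1 - r)^ν) := by
    have h3 : HasSum (fun n : ℕ => if n = 0 then (1:ℝ) else 0) 1 := hasSum_ite_eq 0 1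
    have h4 := h3.sub h
    rw [show 1 + (0 + -r) = 1 - r by ring] at h4
    refine h4.congr_fun ?_
    intro n
    rw [binomialSeries_apply]
    simp only [F, G, map_sub, PowerSeries.coeff_one, PowerSeries.coeff_mk, c_eq_choose]
    simp
    rw [neg_pow]
    by_cases hn : n = 0
    · simp [hn]
    · simp [hn]; ring
  exact sum_le_hasSum _ (fun n _ => mul_nonneg (NN_F h0 h1 n) (by positivity)) h2

lemma p_le {ν : ℝ} (h0 : 0 < ν) (h1 : ν < 1) (k N : ℕ) {r : ℝ} (hr : 0 < r) (hr1 : r < 1) :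
    p ν k N * r ^ N ≤ (1 - (1 - r) ^ ν) ^ k := by
  have e0 : 0 ≤ ev N r (F ν) :=
    Finset.sum_nonneg fun i _ => mul_nonneg (NN_F h0 h1 _) (by positivity)
  refine le_trans ?_ (pow_le_pow_left₀ e0 (ev_F_le h0 h1 N hr.le hr1) k)
  refine le_trans ?_ (ev_pow_le (NN_F h0 h1) N hr.le k)
  have : p ν k N = ∑ n ∈ Finset.range (N+1), PowerSeries.coeff n (F ν ^ k) := by
    unfold p P
    rw [PowerSeries.coeff_mul, Finset.Nat.sum_antidiagonal_eq_sum_range_succ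
      (fun i j => PowerSeries.coeff i (F ν ^ k) * PowerSeries.coeff j (G 0))]
    simp [G, c_zero_left]
  rw [this, Finset.sum_mul]
  apply Finset.sum_le_sum
  intro n hn
  apply mul_le_mul_of_nonneg_left _ ((NN_F h0 h1).pow k n)
  apply pow_le_pow_of_le_one hr.le hr1.le
  simp at hn; omega

lemma c_bound0 {a : ℝ} (h0 : 0 ≤ a) (h1 : a ≤ 1) (N : ℕ) : c a N ≤ ((N:ℝ) + 1) ^ (-a) := by
  induction N with
  | zero => simp [c]
  | succ n ih =>
    rw [c_succ]
    have hn : (0:ℝ) < n + 1 := by positivity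
    have hs : (1 + 1 / ((n:ℝ)+1)) ^ a ≤ 1 + a * (1 / (n+1)) := by
      apply rpow_one_add_le_one_add_mul_self _ h0 h1
      have : 0 ≤ 1 / ((n:ℝ)+1) := by positivity
      linarith
    have hfac : 0 ≤ ((n:ℝ) + 1 - a) / (n + 1) := by
      apply div_nonneg <;> linarith [(Nat.cast_nonneg n : (0:ℝ) ≤ n)]
    have e : (((n+1:ℕ):ℝ) + 1) = (n+1) * (1 + 1 / ((n:ℝ)+1)) := by push_cast; field_simp; 
    refine (mul_le_mul_of_nonneg_right ih hfac).trans ?_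
    rw [e, Real.mul_rpow hn.le (by positivity)]
    apply mul_le_mul_of_nonneg_left _ (by positivity)
    have hpos : 0 < (1 + 1 / ((n:ℝ)+1)) ^ a := by positivity
    rw [Real.rpow_neg (by positivity), ← one_div, le_div_iff₀ hpos]
    calc ((n:ℝ) + 1 - a) / (n + 1) * (1 + 1 / ((n:ℝ)+1)) ^ a
        ≤ ((n:ℝ) + 1 - a) / (n + 1) * (1 + a * (1 / (n+1))) := by gcongr
      _ = 1 - (a / (n+1))^2 := by field_simp; ring
      _ ≤ 1 := by linarith [sq_nonneg (a / ((n:ℝ)+1))]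

lemma c_bound (m : ℕ) : ∀ (a : ℝ) (N : ℕ), (m:ℝ) ≤ a → a ≤ m + 1 → m ≤ N →
    |c a N| ≤ m.factorial * ((N:ℝ) + 1 - m) ^ (-a) := by
  induction m with
  | zero =>
    intro a N h0 h1 _
    simp at h0 h1
    rw [abs_of_nonneg (c_nonneg h1 N)]
    simpa using c_bound0 h0 h1 N
  | succ m ih =>
    intro a N h0 h1 hN
    obtain ⟨n, rfl⟩ : ∃ n, N = n + 1 := ⟨N - 1, by omega⟩
    push_cast at h0 h1
    have hmn : m ≤ n := by omega
    have hmn' : (m:ℝ) ≤ n := by exact_mod_cast hmn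
    have hm0 : (0:ℝ) ≤ m := by positivity
    have h := ih (a - 1) n (by linarith) (by linarith) hmn
    rw [c_shift, abs_mul]
    have hpos : (0:ℝ) < (n:ℝ) + 1 - m := by linarith
    have e1 : |(1 - a) / ((n:ℝ)+1)| ≤ (m+1) / (n+1 - m) := by
      rw [abs_div, abs_of_pos (by positivity : (0:ℝ) < n + 1)]
      rw [abs_of_nonpos (by linarith)]
      apply div_le_div₀ <;> linarith
    refine (mul_le_mul e1 h (abs_nonneg _) (by positivity)).trans ?_
    rw [Nat.factorial_succ]
    push_cast
    have e2 : ((n:ℝ) + 1 + 1 - (m + 1)) = n + 1 - m := by ring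
    rw [e2, show -(a-1) = -a + 1 by ring, Real.rpow_add hpos, Real.rpow_one]
    apply le_of_eq
    field_simp

lemma c_bound' {a : ℝ} (ha : 0 ≤ a) {N : ℕ} (hN : 2 * a ≤ N) (hN0 : 0 < N) :
    |c a N| * (N:ℝ) ^ a ≤ (⌊a⌋₊).factorial * 2 ^ a := by
  have hm := Nat.floor_le ha
  have hm' := (Nat.lt_floor_add_one a).le
  have hNr : (0:ℝ) < N := by exact_mod_cast hN0
  have h := c_bound ⌊a⌋₊ a N hm hm' (by
    have : ((⌊a⌋₊:ℕ):ℝ) ≤ N := by linarith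
    exact_mod_cast this)
  have h2 : ((N:ℝ) + 1 - ⌊a⌋₊) ^ (-a) ≤ ((N:ℝ)/2) ^ (-a) := by
    apply Real.rpow_le_rpow_of_nonpos (by positivity) (by linarith) (by linarith)
  have h3 : ((N:ℝ)/2) ^ (-a) * N ^ a = 2 ^ a := by
    rw [Real.div_rpow hNr.le (by norm_num), Real.rpow_neg hNr.le, Real.rpow_neg (by norm_num)]
    have : (N:ℝ)^a ≠ 0 := by positivity
    field_simp
  calc |c a N| * (N:ℝ) ^ a ≤ ((⌊a⌋₊).factorial * ((N:ℝ)/2) ^ (-a)) * (N:ℝ) ^ a := by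
        gcongr
        exact h.trans (by gcongr)
    _ = _ := by rw [mul_assoc, h3]

lemma c_tendsto (a : ℝ) :
    Tendsto (fun N : ℕ => c a N * (N:ℝ) ^ a) atTop (𝓝 (Real.Gamma (1 - a))⁻¹) := by
  by_cases hp : ∃ m : ℕ, 1 - a = -m
  · obtain ⟨m, hm⟩ := hp
    rw [hm, Real.Gamma_neg_nat_eq_zero, inv_zero]
    apply tendsto_const_nhds.congr'
    filter_upwards [eventually_gt_atTop m] with N hN
    have : c a N = 0 := by
      apply Finset.prod_eq_zero (Finset.mem_range.2 hN)
      rw [show (m:ℝ) + 1 - a = 0 by linarith]; simp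
    simp [this]
  · push Not at hp
    have hG : Real.Gamma (1 - a) ≠ 0 := Real.Gamma_ne_zero hp
    have h1 := (Real.GammaSeq_tendsto_Gamma (1 - a)).inv₀ hG
    have h2 : Tendsto (fun N : ℕ => (N:ℝ) / (N + (1 - a))) atTop (𝓝 1) :=
      tendsto_natCast_div_add_atTop (1 - a)
    have h3 := h1.mul h2
    rw [mul_one] at h3
    refine h3.congr' ?_
    filter_upwards [eventually_gt_atTop 0] with N hN
    have hNr : (0:ℝ) < N := by exact_mod_cast hN
    have hne : (N:ℝ) + (1 - a) ≠ 0 := by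
      intro h; apply hp N; linarith
    have hc : c a N = (∏ j ∈ Finset.range N, ((1 - a) + (j:ℝ))) / N.factorial := by
      unfold c
      rw [Finset.prod_div_distrib, ← Finset.prod_range_add_one_eq_factorial]
      push_cast
      congr 1
      apply Finset.prod_congr rfl; intros; ring
    rw [hc, Real.GammaSeq, Finset.prod_range_succ, Real.rpow_sub hNr, Real.rpow_one]
    have h4 : (N:ℝ)^a ≠ 0 := by positivity
    have h5 := Nat.factorial_ne_zero N
    rw [add_comm (1 - a) (N:ℝ)]
    rw [inv_div]
    field_simp

lemma inv_Gamma_bound {a : ℝ} (ha : 0 ≤ a) :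
    |(Real.Gamma (1 - a))⁻¹| ≤ (⌊a⌋₊).factorial * 2 ^ a := by
  refine le_of_tendsto (c_tendsto a).abs ?_
  filter_upwards [eventually_gt_atTop 0, eventually_ge_atTop ⌈2 * a⌉₊] with N hN hN2
  rw [abs_mul, abs_of_nonneg (by positivity : (0:ℝ) ≤ (N:ℝ)^a)]
  exact c_bound' ha (Nat.ceil_le.1 hN2) hN

/-- summability of the majorant -/
lemma summable_major {ν : ℝ} (h0 : 0 < ν) (h1 : ν < 1) {R : ℝ} (hR : 0 ≤ R) :
    Summable (fun j : ℕ => R ^ j / j.factorial * ((⌊ν * j⌋₊).factorial * 2 ^ (ν * j))) := by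
  set w : ℝ := max 1 (2 * R) with hw
  have hw1 : 1 ≤ w := le_max_left _ _
  have hw2 : 2 * R ≤ w := le_max_right _ _
  set B : ℝ := w ^ (1 / (1 - ν)) with hB
  have hν : 0 < 1 - ν := by linarith
  have hgeo : Summable (fun j : ℕ => Real.exp (2 * B) * ((2:ℝ) ^ (-(1 - ν))) ^ j) := by
    apply Summable.mul_left
    apply summable_geometric_of_lt_one (by positivity)
    apply Real.rpow_lt_one_of_one_lt_of_neg (by norm_num) (by linarith)
  refine Summable.of_nonneg_of_le (fun j => by positivity) (fun j => ?_) hgeo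
  set m := ⌊ν * j⌋₊ with hm
  have hj0 : (0:ℝ) ≤ j := by positivity
  have hmle : (m:ℝ) ≤ ν * j := Nat.floor_le (by positivity)
  have hmj : m ≤ j := by
    have : (m:ℝ) ≤ j := by nlinarith
    exact_mod_cast this
  set d := j - m with hd
  have hdr : (d:ℝ) = j - m := by rw [hd, Nat.cast_sub hmj]
  have hdj : (1 - ν) * j ≤ d := by rw [hdr]; linarith
  have hfac : (m.factorial : ℝ) / j.factorial ≤ 1 / d.factorial := by
    rw [div_le_div_iff₀ (by positivity) (by positivity), one_mul]
    have := Nat.le_of_dvd (Nat.factorial_pos _) (Nat.factorial_mul_factorial_dvd_factorial hmj)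
    exact_mod_cast this
  have hpw : R ^ j * 2 ^ (ν * j) ≤ B ^ d := by
    have s1 : (2:ℝ) ^ (ν * j) ≤ 2 ^ j := by
      rw [← Real.rpow_natCast 2 j]
      apply Real.rpow_le_rpow_of_exponent_le (by norm_num); nlinarith
    calc R ^ j * 2 ^ (ν * j) ≤ R ^ j * 2 ^ j := by gcongr
      _ = (2 * R) ^ j := by rw [← mul_pow, mul_comm]
      _ ≤ w ^ j := by gcongr
      _ = w ^ (j:ℝ) := (Real.rpow_natCast _ _).symm
      _ ≤ w ^ ((1 / (1 - ν)) * d) := by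
          apply Real.rpow_le_rpow_of_exponent_le hw1
          rw [one_div, inv_mul_eq_div, le_div_iff₀ hν]; linarith
      _ = B ^ d := by rw [Real.rpow_mul (by linarith), Real.rpow_natCast]
  have hB0 : 0 ≤ B := by positivity
  have hexp : B ^ d / d.factorial ≤ Real.exp (2 * B) * (2:ℝ) ^ (-(d:ℝ)) := by
    have := Real.pow_div_factorial_le_exp (2 * B) (by positivity) d
    rw [Real.rpow_neg (by norm_num), Real.rpow_natCast, ← div_eq_mul_inv, le_div_iff₀ (by positivity)]
    refine le_trans (le_of_eq ?_) this
    rw [mul_pow]; ring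
  calc R ^ j / j.factorial * (m.factorial * 2 ^ (ν * j))
      = (R ^ j * 2 ^ (ν * j)) * (m.factorial / j.factorial) := by ring
    _ ≤ B ^ d * (1 / d.factorial) := by gcongr
    _ = B ^ d / d.factorial := by ring
    _ ≤ _ := hexp
    _ ≤ _ := by
      gcongr
      rw [← Real.rpow_natCast, ← Real.rpow_mul (by norm_num)]
      apply Real.rpow_le_rpow_of_exponent_le (by norm_num)
      linarith

/-- terms of the survival function -/
noncomputable def u (ν : ℝ) (j : ℕ) : ℝ := (-1)^j / j.factorial * (Real.Gamma (1 - ν * j))⁻¹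

noncomputable def W (ν z : ℝ) : ℝ := ∑' j : ℕ, u ν j * z ^ j

lemma summable_u {ν : ℝ} (h0 : 0 < ν) (h1 : ν < 1) {R : ℝ} (hR : 0 ≤ R) :
    Summable (fun j => |u ν j| * R ^ j) := by
  refine Summable.of_nonneg_of_le (fun j => by positivity) (fun j => ?_) (summable_major h0 h1 hR)
  have h := inv_Gamma_bound (a := ν * j) (by positivity)
  unfold u
  rw [abs_mul, abs_div, abs_pow]
  simp only [abs_neg, abs_one, one_pow, Nat.abs_cast]
  calc _ = R ^ j / j.factorial * |(Real.Gamma (1 - ν * j))⁻¹| := by ring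
    _ ≤ _ := by gcongr

lemma W_zero (ν : ℝ) : W ν 0 = 1 := by
  unfold W
  rw [tsum_eq_single 0]
  · simp [u]
  · intro j hj; simp [hj]

lemma hasDerivAt_W {ν : ℝ} (h0 : 0 < ν) (h1 : ν < 1) (z : ℝ) :
    HasDerivAt (W ν) (-mWright ν z) z := by
  set R := |z| + 1 with hR
  have hR0 : 0 < R := by positivity
  have hb : ∀ (n : ℕ) (y : ℝ), y ∈ Metric.ball (0:ℝ) R →
      ‖u ν n * (n * y ^ (n - 1))‖ ≤ |u ν n| * (2 * R + 2) ^ n := by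
    intro n y hy
    simp at hy
    rw [norm_mul, Real.norm_eq_abs]
    gcongr
    rw [norm_mul, norm_pow, Real.norm_eq_abs, Real.norm_eq_abs, Nat.abs_cast]
    have e1 : (n:ℝ) ≤ 2 ^ n := by exact_mod_cast Nat.lt_two_pow_self.le
    have e2 : |y| ^ (n-1) ≤ (R+1)^n := by
      calc |y| ^ (n-1) ≤ (R+1)^(n-1) := by gcongr; linarith
        _ ≤ (R+1)^n := by apply pow_le_pow_right₀ <;> [linarith; omega]
    calc (n:ℝ) * |y| ^ (n-1) ≤ 2 ^ n * (R+1)^n := by gcongr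
      _ = _ := by rw [← mul_pow]; ring
  have hs := summable_u h0 h1 (R := 2 * R + 2) (by positivity)
  have hzmem : z ∈ Metric.ball (0:ℝ) R := by simp [hR]
  have key := hasDerivAt_tsum_of_isPreconnected (g := fun n y => u ν n * y ^ n)
    (g' := fun n y => u ν n * (n * y ^ (n-1))) hs Metric.isOpen_ball
    (convex_ball (0:ℝ) R).isPreconnected (fun n y _ => (hasDerivAt_pow n y).const_mul _) hb
    (Metric.mem_ball_self hR0 : (0:ℝ) ∈ _)
    (by
      apply summable_of_ne_finset_zero (s := {0})
      intro n hn; simp at hn; simp [hn]) hzmem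
  have e : ∑' n, u ν n * (n * z ^ (n-1)) = -mWright ν z := by
    have hsum : Summable (fun n => u ν n * (n * z ^ (n-1))) :=
      Summable.of_norm_bounded hs (fun n => hb n z hzmem)
    rw [hsum.tsum_eq_zero_add]
    unfold mWright
    rw [← tsum_neg]
    simp only [Nat.cast_zero, zero_mul, mul_zero, zero_add]
    congr 1
    ext n
    unfold u
    rw [show -(ν * n) + 1 - ν = 1 - ν * ((n + 1 : ℕ):ℝ) by push_cast; ring, Nat.factorial_succ,
      neg_pow z n, pow_succ]
    have := Nat.factorial_ne_zero n
    push_cast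
    rw [← div_div ((-1)^n * z^n), div_eq_mul_inv _ (Real.Gamma _)]
    field_simp
  rw [e] at key
  exact key

noncomputable def kk (ν z : ℝ) (N : ℕ) : ℕ := ⌊z * (N:ℝ) ^ ν⌋₊

lemma tendsto_Npow {ν : ℝ} (h0 : 0 < ν) : Tendsto (fun N : ℕ => (N:ℝ) ^ ν) atTop atTop :=
  (tendsto_rpow_atTop h0).comp tendsto_natCast_atTop_atTop

lemma kk_tendsto {ν z : ℝ} (h0 : 0 < ν) (hz : 0 ≤ z) :
    Tendsto (fun N : ℕ => (kk ν z N : ℝ) / (N:ℝ) ^ ν) atTop (𝓝 z) :=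
  (tendsto_nat_floor_mul_div_atTop hz).comp (tendsto_Npow h0)

lemma choose_tendsto {ν z : ℝ} (h0 : 0 < ν) (hz : 0 ≤ z) (j : ℕ) :
    Tendsto (fun N : ℕ => ((kk ν z N).choose j : ℝ) / (N:ℝ) ^ (ν * j)) atTop
      (𝓝 (z ^ j / j.factorial)) := by
  have h1 : Tendsto (fun N : ℕ => (∏ i ∈ Finset.range j,
      ((kk ν z N : ℝ) / (N:ℝ) ^ ν - i / (N:ℝ)^ν)) / j.factorial) atTop
      (𝓝 ((∏ i ∈ Finset.range j, (z - 0)) / j.factorial)) := by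
    apply Tendsto.div_const
    apply tendsto_finsetProd
    intro i _
    exact (kk_tendsto h0 hz).sub ((tendsto_Npow h0).const_div_atTop _)
  simp only [sub_zero, Finset.prod_const, Finset.card_range] at h1
  refine h1.congr ?_
  intro N
  rw [Nat.cast_choose_eq_descPochhammer_div, descPochhammer_eval_eq_prod_range,
    Real.rpow_mul (by positivity), Real.rpow_natCast]
  simp_rw [← sub_div]
  rw [Finset.prod_div_distrib]
  simp
  ring

lemma p_tendsto {ν z : ℝ} (h0 : 0 < ν) (h1 : ν < 1) (hz : 0 ≤ z) :
    Tendsto (fun N : ℕ => p ν (kk ν z N) N) atTop (𝓝 (W ν z)) := by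
  have hp : ∀ N : ℕ, p ν (kk ν z N) N
      = ∑' j : ℕ, (-1)^j * ((kk ν z N).choose j : ℝ) * c (ν * j) N := by
    intro N
    rw [p_eq_sum, tsum_eq_sum]
    intro j hj
    simp at hj
    rw [Nat.choose_eq_zero_of_lt (by omega)]; simp
  simp_rw [hp]
  refine tendsto_tsum_of_dominated_convergence (summable_major h0 h1 hz) ?_ ?_
  · intro j
    have h := ((choose_tendsto h0 hz j).mul (c_tendsto (ν * j))).const_mul ((-1:ℝ)^j)
    have e : (-1:ℝ)^j * (z ^ j / j.factorial * (Real.Gamma (1 - ν * j))⁻¹) = u ν j * z ^ j := by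
      unfold u; ring
    rw [e] at h
    refine h.congr' ?_
    filter_upwards [eventually_gt_atTop 0] with N hN
    have : (N:ℝ) ^ (ν * j) ≠ 0 := by
      have : (0:ℝ) < N := by exact_mod_cast hN
      positivity
    field_simp
  · have hlim : Tendsto (fun N : ℕ => (N:ℝ) ^ (1 - ν)) atTop atTop := tendsto_Npow (by linarith)
    filter_upwards [eventually_gt_atTop 0, hlim.eventually_ge_atTop (2 * z)] with N hN hN2 j
    have hNr : (0:ℝ) < N := by exact_mod_cast hN
    have hk : (kk ν z N : ℝ) ≤ z * (N:ℝ)^ν := Nat.floor_le (by positivity)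
    rcases lt_or_ge (kk ν z N) j with hj | hj
    · rw [Nat.choose_eq_zero_of_lt hj]; simp; positivity
    · have hjr : (j:ℝ) ≤ kk ν z N := by exact_mod_cast hj
      have h2 : 2 * (ν * j) ≤ N := by
        have e : (N:ℝ) ^ (1 - ν) * (N:ℝ)^ν = N := by
          rw [← Real.rpow_add hNr]; simp
        calc 2 * (ν * j) ≤ 2 * (1 * j) := by gcongr
          _ ≤ 2 * z * (N:ℝ)^ν := by linarith
          _ ≤ (N:ℝ) ^ (1 - ν) * (N:ℝ)^ν := by gcongr
          _ = N := e
      have hb := c_bound' (a := ν * j) (by positivity) h2 hN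
      have hc : ((kk ν z N).choose j : ℝ) ≤ z ^ j / j.factorial * (N:ℝ) ^ (ν * j) := by
        refine (Nat.choose_le_pow_div j (kk ν z N)).trans ?_
        rw [Real.rpow_mul hNr.le, Real.rpow_natCast, div_mul_eq_mul_div, ← mul_pow]
        gcongr
      rw [norm_mul, norm_mul, norm_pow]
      simp only [norm_neg, norm_one, one_pow, one_mul, Real.norm_eq_abs, Nat.abs_cast]
      calc ((kk ν z N).choose j : ℝ) * |c (ν * j) N|
          ≤ z ^ j / j.factorial * (N:ℝ) ^ (ν * j) * |c (ν * j) N| := by gcongr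
        _ = z ^ j / j.factorial * (|c (ν * j) N| * (N:ℝ) ^ (ν * j)) := by ring
        _ ≤ _ := by gcongr

lemma W_nonneg {ν z : ℝ} (h0 : 0 < ν) (h1 : ν < 1) (hz : 0 ≤ z) : 0 ≤ W ν z :=
  ge_of_tendsto' (p_tendsto h0 h1 hz) fun N => p_nonneg h0 h1 _ N

lemma W_antitone {ν : ℝ} (h0 : 0 < ν) (h1 : ν < 1) : AntitoneOn (W ν) (Set.Ici 0) := by
  intro a ha b hb hab
  refine le_of_tendsto_of_tendsto' (p_tendsto h0 h1 hb) (p_tendsto h0 h1 ha) ?_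
  intro N
  apply p_antitone h0 h1 N
  unfold kk
  gcongr

lemma W_le {ν z : ℝ} (h0 : 0 < ν) (h1 : ν < 1) (hz : 0 ≤ z) :
    W ν z * Real.exp (-1) ≤ Real.exp (-z) := by
  have hA := (p_tendsto h0 h1 hz).mul (Real.tendsto_one_add_div_pow_exp (-1))
  have hB : Tendsto (fun N : ℕ => Real.exp (-((kk ν z N : ℝ) / (N:ℝ) ^ ν))) atTop
      (𝓝 (Real.exp (-z))) := (Real.continuous_exp.tendsto _).comp (kk_tendsto h0 hz).neg
  refine le_of_tendsto_of_tendsto hA hB ?_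
  filter_upwards [eventually_gt_atTop 1] with N hN
  have hNr : (1:ℝ) < N := by exact_mod_cast hN
  have hinv : (N:ℝ)⁻¹ < 1 := inv_lt_one_of_one_lt₀ hNr
  have hinv0 : 0 < (N:ℝ)⁻¹ := by positivity
  have h := p_le h0 h1 (kk ν z N) N (r := 1 - (N:ℝ)⁻¹) (by linarith) (by linarith)
  have e : 1 + -1 / (N:ℝ) = 1 - (N:ℝ)⁻¹ := by rw [neg_div, one_div]; ring
  rw [e]
  refine h.trans ?_
  rw [sub_sub_cancel, Real.inv_rpow (by linarith)]
  have hx : 1 - ((N:ℝ)^ν)⁻¹ ≤ Real.exp (-((N:ℝ)^ν)⁻¹) := by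
    have := Real.add_one_le_exp (-((N:ℝ)^ν)⁻¹); linarith
  have hx0 : 0 ≤ 1 - ((N:ℝ)^ν)⁻¹ := by
    have : ((N:ℝ)^ν)⁻¹ ≤ 1 := inv_le_one_of_one_le₀ (Real.one_le_rpow hNr.le h0.le)
    linarith
  refine (pow_le_pow_left₀ hx0 hx _).trans ?_
  rw [← Real.exp_nat_mul]
  apply le_of_eq
  congr 1
  ring

lemma W_tendsto {ν : ℝ} (h0 : 0 < ν) (h1 : ν < 1) : Tendsto (W ν) atTop (𝓝 0) := by
  have hB : Tendsto (fun z : ℝ => Real.exp (-z) * Real.exp 1) atTop (𝓝 (0 * Real.exp 1)) :=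
    Real.tendsto_exp_neg_atTop_nhds_zero.mul_const _
  rw [zero_mul] at hB
  refine tendsto_of_tendsto_of_tendsto_of_le_of_le' tendsto_const_nhds hB ?_ ?_
  · filter_upwards [eventually_ge_atTop 0] with z hz using W_nonneg h0 h1 hz
  · filter_upwards [eventually_ge_atTop 0] with z hz
    have h := mul_le_mul_of_nonneg_right (W_le h0 h1 hz) (Real.exp_pos 1).le
    rwa [mul_assoc, ← Real.exp_add, neg_add_cancel, Real.exp_zero, mul_one] at h

lemma mWright_nonneg {ν : ℝ} (h0 : 0 < ν) (h1 : ν < 1) {z : ℝ} (hz : 0 ≤ z) :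
    0 ≤ mWright ν z := by
  have hd := (hasDerivAt_W h0 h1 z).hasDerivWithinAt (s := Set.Ici 0)
  have h2 := (W_antitone h0 h1).derivWithin_nonpos (x := z)
  rw [hd.derivWithin (uniqueDiffOn_Ici 0 z hz)] at h2
  linarith

lemma integral_mWright {ν : ℝ} (h0 : 0 < ν) (h1 : ν < 1) :
    ∫ z in Set.Ioi (0:ℝ), mWright ν z = 1 := by
  have h := integral_Ioi_of_hasDerivAt_of_nonpos' (a := 0) (g := W ν) (g' := fun z => -mWright ν z)
    (fun x _ => hasDerivAt_W h0 h1 x)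
    (fun x hx => by have := mWright_nonneg h0 h1 (le_of_lt hx); linarith) (W_tendsto h0 h1)
  rw [integral_neg, W_zero] at h
  linarith

end MW

/-- For `0 < ν < 1` the M-Wright function is nonnegative on the half line, and
consequently the fundamental solution `G_C(x,t;ν) = (1/(2 t^ν)) M_ν(|x|/t^ν)` of the
Cauchy problem for the time-fractional diffusion-wave equation is a probability
density in `x` for each fixed `t > 0`. -/
theorem mWright_nonneg_and_pdf (ν : ℝ) (hν0 : 0 < ν) (hν1 : ν < 1) :
    (∀ z ≥ (0:ℝ), 0 ≤ mWright ν z) ∧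
    ∀ t : ℝ, 0 < t →
      (∀ x : ℝ, 0 ≤ 1 / (2 * t ^ ν) * mWright ν (|x| / t ^ ν)) ∧
      ∫ x : ℝ, 1 / (2 * t ^ ν) * mWright ν (|x| / t ^ ν) = 1 := by
  refine ⟨fun z hz => MW.mWright_nonneg hν0 hν1 hz, fun t ht => ?_⟩
  have hc : 0 < t ^ ν := by positivity
  refine ⟨fun x => mul_nonneg (by positivity) (MW.mWright_nonneg hν0 hν1 (by positivity)), ?_⟩
  rw [integral_comp_abs (f := fun y => 1 / (2 * t ^ ν) * mWright ν (y / t ^ ν)),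
    integral_const_mul]
  have h := integral_comp_mul_right_Ioi (fun y => mWright ν y) 0 (inv_pos.2 hc)
  simp only [zero_mul, inv_inv, smul_eq_mul] at h
  simp_rw [div_eq_mul_inv _ (t ^ ν)]
  rw [h, MW.integral_mWright hν0 hν1]
  field_simp
end

section
/- Let 0 < α < 1 and set ν = α/2. Then the fundamental solution of the Cauchy problem for the time-fractional diffusion equation, u(x,t) = (1/(2 t^ν)) M_ν(x/t^ν), satisfies for every x > 0 and t > 0 the time-fractional diffusion equation with Caputo derivative: (1/Γ(1−α)) ∫₀^t (∂u/∂τ)(x,τ) (t−τ)^(−α) dτ = (∂²u/∂x²)(x,t). -/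
open MeasureTheory

section FracDiff
open Set Filter Topology Complex

lemma fd_shift (f : ℂ → ℂ) (hf : Differentiable ℂ f) (B : ℝ → ℝ) (hB : Integrable B)
    (hb : ∀ l θ : ℝ, 0 ≤ θ → θ ≤ Real.pi → ‖f (l + θ * I)‖ ≤ B l)
    (htop : Tendsto B atTop (𝓝 0)) (hbot : Tendsto B atBot (𝓝 0)) :
    ∫ l : ℝ, f l = ∫ l : ℝ, f (l + Real.pi * I) := by
  have hc := hf.continuous
  have i0 : Integrable (fun l : ℝ => f l) := by
    refine hB.mono' (by fun_prop) (ae_of_all _ fun l => ?_)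
    simpa using hb l 0 le_rfl Real.pi_pos.le
  have i1 : Integrable (fun l : ℝ => f (l + Real.pi * I)) := by
    refine hB.mono' (by fun_prop) (ae_of_all _ fun l => ?_)
    simpa using hb l Real.pi Real.pi_pos.le le_rfl
  have t0 := intervalIntegral_tendsto_integral i0 tendsto_neg_atTop_atBot tendsto_id
  have t1 := intervalIntegral_tendsto_integral i1 tendsto_neg_atTop_atBot tendsto_id
  have bnd : ∀ R : ℝ, ‖∫ y in (0:ℝ)..Real.pi, f (R + y * I)‖ ≤ B R * Real.pi := by
    intro R
    have := intervalIntegral.norm_integral_le_of_norm_le_const (a := 0) (b := Real.pi)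
      (f := fun y : ℝ => f (R + y * I)) (C := B R) (by
        intro y hy
        rw [uIoc_of_le Real.pi_pos.le] at hy
        exact hb R y hy.1.le hy.2)
    simpa [abs_of_pos Real.pi_pos] using this
  have s0 : Tendsto (fun R : ℝ => ∫ y in (0:ℝ)..Real.pi, f (R + y * I)) atTop (𝓝 0) :=
    squeeze_zero_norm bnd (by simpa using htop.mul_const Real.pi)
  have s1 : Tendsto (fun R : ℝ => ∫ y in (0:ℝ)..Real.pi, f (((-R : ℝ) : ℂ) + y * I)) atTop (𝓝 0) :=
    squeeze_zero_norm (fun R => bnd (-R))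
      (by simpa using (hbot.comp tendsto_neg_atTop_atBot).mul_const Real.pi)
  have key : ∀ R : ℝ, (∫ l in (-R)..R, f l) - (∫ l in (-R)..R, f (l + Real.pi * I)) =
      - (I * ∫ y in (0:ℝ)..Real.pi, f (R + y * I)) +
        I * ∫ y in (0:ℝ)..Real.pi, f (((-R : ℝ) : ℂ) + y * I) := by
    intro R
    have := Complex.integral_boundary_rect_eq_zero_of_differentiableOn f
      ((-R : ℝ) : ℂ) ((R : ℂ) + Real.pi * I) hf.differentiableOn
    simp at this
    push_cast at this ⊢
    linear_combination this
  have l1 := (t0.sub t1)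
  have l2 : Tendsto (fun R : ℝ => (∫ l in (-R)..R, f l) - (∫ l in (-R)..R, f (l + Real.pi * I)))
      atTop (𝓝 0) := by
    simp_rw [key]
    simpa using ((s0.const_mul I).neg).add (s1.const_mul I)
  exact sub_eq_zero.1 (tendsto_nhds_unique l1 l2)

lemma fd_cov {F : Type*} [NormedAddCommGroup F] [NormedSpace ℝ F] (g : ℝ → F) :
    ∫ r in Ioi (0:ℝ), g r = ∫ l : ℝ, Real.exp l • g (Real.exp l) := by
  have := integral_image_eq_integral_abs_deriv_smul (s := univ) (f := Real.exp) (f' := Real.exp)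
    MeasurableSet.univ (fun x _ => (Real.hasDerivAt_exp x).hasDerivWithinAt)
    Real.exp_injective.injOn g
  rw [image_univ, Real.range_exp] at this
  simpa [abs_of_pos (Real.exp_pos _)] using this

lemma fd_cov_int {F : Type*} [NormedAddCommGroup F] [NormedSpace ℝ F] (g : ℝ → F) :
    IntegrableOn g (Ioi (0:ℝ)) ↔ Integrable (fun l : ℝ => Real.exp l • g (Real.exp l)) := by
  have := integrableOn_image_iff_integrableOn_abs_deriv_smul (s := univ) (f := Real.exp)
    (f' := Real.exp)
    MeasurableSet.univ (fun x _ => (Real.hasDerivAt_exp x).hasDerivWithinAt)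
    Real.exp_injective.injOn g
  rw [image_univ, Real.range_exp] at this
  simpa [abs_of_pos (Real.exp_pos _)] using this

lemma fd_lap_diff (α : ℝ) (S : Set ℝ) (hS : MeasurableSet S) (hS0 : S ⊆ Ioi 0) (s₀ : ℂ) (b : ℝ)
    (hb : b < s₀.re) (h0 : IntegrableOn (fun σ : ℝ => σ ^ (-α) * Real.exp (-(b * σ))) S)
    (h1 : IntegrableOn (fun σ : ℝ => σ ^ (1-α) * Real.exp (-(b * σ))) S) :
    DifferentiableAt ℂ (fun s : ℂ => ∫ σ in S, cexp (-(s * σ)) * ((σ ^ (-α) : ℝ) : ℂ)) s₀ := by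
  have hn : ∀ s : ℂ, ∀ σ : ℝ, ‖cexp (-(s * σ))‖ = Real.exp (-(s.re * σ)) := by
    intro s σ; rw [Complex.norm_exp]; simp
  have hopen : {s : ℂ | b < s.re} ∈ 𝓝 s₀ := (isOpen_lt continuous_const continuous_re).mem_nhds hb
  refine (hasDerivAt_integral_of_dominated_loc_of_deriv_le
    (F' := fun s σ => -(σ:ℂ) * cexp (-(s * σ)) * ((σ ^ (-α) : ℝ) : ℂ))
    (bound := fun σ => σ ^ (1-α) * Real.exp (-(b * σ))) hopen ?_ ?_ ?_ ?_ h1 ?_).2.differentiableAt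
  · refine Eventually.of_forall fun s => ?_
    refine Measurable.aestronglyMeasurable ?_
    fun_prop
  · refine h0.mono' ?_ ?_
    · refine Measurable.aestronglyMeasurable ?_
      fun_prop
    · refine (ae_restrict_iff' hS).2 (ae_of_all _ fun σ hσ => ?_)
      have hσ : 0 < σ := hS0 hσ
      rw [norm_mul, hn, norm_real, Real.norm_of_nonneg (by positivity), mul_comm]
      gcongr
  · refine Measurable.aestronglyMeasurable ?_
    fun_prop
  · refine (ae_restrict_iff' hS).2 (ae_of_all _ fun σ hσ s hs => ?_)
    have hσ : 0 < σ := hS0 hσ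
    have hs : b < s.re := hs
    rw [norm_mul, norm_mul, norm_neg, hn, norm_real, norm_real, Real.norm_of_nonneg hσ.le,
      Real.norm_of_nonneg (by positivity)]
    have : σ ^ (1-α) = σ * σ ^ (-α) := by
      rw [sub_eq_add_neg, Real.rpow_add hσ, Real.rpow_one]
    rw [this]
    calc σ * Real.exp (-(s.re * σ)) * σ ^ (-α) = σ * σ ^ (-α) * Real.exp (-(s.re * σ)) := by ring
      _ ≤ _ := by gcongr
  · refine ae_of_all _ fun σ s _ => ?_
    have h := (((hasDerivAt_id s).mul_const (σ:ℂ)).neg.cexp).mul_const ((σ ^ (-α) : ℝ) : ℂ)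
    refine h.congr_deriv ?_
    simp only [id, Pi.neg_apply]
    ring

lemma fd_int_Ioi (a b : ℝ) (ha : -1 < a) (hb : 0 < b) :
    IntegrableOn (fun σ : ℝ => σ ^ a * Real.exp (-(b * σ))) (Ioi 0) := by
  have := integrableOn_rpow_mul_exp_neg_mul_rpow (p := 1) ha one_pos hb
  simpa using this

lemma fd_int_Ioc (a b t : ℝ) (ha : -1 < a) (ht : 0 < t) :
    IntegrableOn (fun σ : ℝ => σ ^ a * Real.exp (-(b * σ))) (Ioc 0 t) := by
  have h : IntegrableOn (fun σ : ℝ => σ ^ a) (Ioc 0 t) :=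
    (intervalIntegrable_iff_integrableOn_Ioc_of_le ht.le).1
      (intervalIntegral.intervalIntegrable_rpow' ha)
  refine Integrable.mul_bdd (c := Real.exp (|b| * t)) h (by fun_prop) ?_
  refine (ae_restrict_iff' measurableSet_Ioc).2 (ae_of_all _ fun σ hσ => ?_)
  rw [Real.norm_of_nonneg (by positivity)]
  apply Real.exp_le_exp.2
  have := neg_abs_le b
  have := abs_nonneg b
  nlinarith [hσ.1, hσ.2]

lemma fd_laplace (α : ℝ) (hα1 : α < 1) (s : ℂ) (hs : 0 < s.re) :
    ∫ σ in Ioi (0:ℝ), cexp (-(s * σ)) * ((σ ^ (-α) : ℝ) : ℂ) =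
      Real.Gamma (1 - α) * s ^ ((α:ℂ) - 1) := by
  have hopen : IsOpen {s : ℂ | 0 < s.re} := isOpen_lt continuous_const continuous_re
  have h1 : AnalyticOnNhd ℂ
      (fun s : ℂ => ∫ σ in Ioi (0:ℝ), cexp (-(s * σ)) * ((σ ^ (-α) : ℝ) : ℂ)) {s : ℂ | 0 < s.re} := by
    refine DifferentiableOn.analyticOnNhd (fun z hz => ?_) hopen
    have hz : 0 < z.re := hz
    exact (fd_lap_diff α _ measurableSet_Ioi subset_rfl z (z.re/2) (by linarith)
      (fd_int_Ioi _ _ (by linarith) (by linarith))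
      (fd_int_Ioi _ _ (by linarith) (by linarith))).differentiableWithinAt
  have h2 : AnalyticOnNhd ℂ
      (fun s : ℂ => Real.Gamma (1 - α) * s ^ ((α:ℂ) - 1)) {s : ℂ | 0 < s.re} := by
    refine DifferentiableOn.analyticOnNhd (fun z hz => ?_) hopen
    have hz : z ∈ slitPlane := Or.inl hz
    exact ((differentiableAt_id.cpow_const hz).const_mul _).differentiableWithinAt
  have hpre : IsPreconnected {s : ℂ | 0 < s.re} := (convex_halfSpace_re_gt 0).isPreconnected
  have hreal : ∀ r : ℝ, 0 < r →
      ∫ σ in Ioi (0:ℝ), cexp (-((r:ℂ) * σ)) * ((σ ^ (-α) : ℝ) : ℂ) =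
      Real.Gamma (1 - α) * (r:ℂ) ^ ((α:ℂ) - 1) := by
    intro r hr
    have := Real.integral_rpow_mul_exp_neg_mul_Ioi (a := 1 - α) (by linarith) hr
    have e : ((r:ℂ) ^ ((α:ℂ) - 1)) = (((1 / r) ^ (1-α) : ℝ) : ℂ) := by
      rw [one_div, Real.inv_rpow hr.le, ← Real.rpow_neg hr.le, Complex.ofReal_cpow hr.le]
      simp
    rw [e, ← Complex.ofReal_mul, mul_comm, ← this, ← integral_complex_ofReal]
    refine setIntegral_congr_fun measurableSet_Ioi fun σ hσ => ?_
    rw [show 1 - α - 1 = -α by ring]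
    push_cast
    ring
  refine h1.eqOn_of_preconnected_of_frequently_eq h2 hpre (z₀ := 1) (by simp) ?_ hs
  have htend : Tendsto (fun n : ℕ => (((1 + 1 / ((n:ℝ) + 1) : ℝ)) : ℂ)) atTop (𝓝[≠] 1) := by
    refine tendsto_nhdsWithin_iff.2 ⟨?_, Eventually.of_forall fun n => ?_⟩
    · have := (tendsto_one_div_add_atTop_nhds_zero_nat (𝕜 := ℝ)).const_add 1
      rw [add_zero] at this
      have h2 := (continuous_ofReal.tendsto 1).comp this
      rw [ofReal_one] at h2
      exact h2
    · have : (0:ℝ) < 1 / ((n:ℝ)+1) := by positivity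
      intro h
      have h' : (((1 + 1 / ((n:ℝ) + 1) : ℝ)) : ℂ) = ((1:ℝ):ℂ) := by simpa using h
      have := Complex.ofReal_injective h'
      linarith
  refine htend.frequently (Frequently.of_forall fun n => ?_)
  exact hreal _ (by positivity)

noncomputable def fdG (α t : ℝ) (s : ℂ) : ℂ :=
  ∫ σ in Ioc (0:ℝ) t, cexp (s * (t - σ)) * ((σ ^ (-α) : ℝ) : ℂ)

lemma fdG_eq (α t : ℝ) (s : ℂ) :
    fdG α t s = cexp (s * t) * ∫ σ in Ioc (0:ℝ) t, cexp (-(s * σ)) * ((σ ^ (-α) : ℝ) : ℂ) := by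
  rw [fdG, ← integral_const_mul]
  congr 1
  ext σ
  rw [← mul_assoc, ← Complex.exp_add]
  congr 2
  ring

lemma fdG_diff (α t : ℝ) (hα1 : α < 1) (ht : 0 < t) : Differentiable ℂ (fdG α t) := by
  have : fdG α t = fun s => cexp (s * t) *
      ∫ σ in Ioc (0:ℝ) t, cexp (-(s * σ)) * ((σ ^ (-α) : ℝ) : ℂ) := funext (fdG_eq α t)
  rw [this]
  intro s
  refine DifferentiableAt.mul (by fun_prop) ?_
  exact fd_lap_diff α _ measurableSet_Ioc (fun x hx => hx.1) s (s.re - 1) (by linarith)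
    (fd_int_Ioc _ _ _ (by linarith) ht) (fd_int_Ioc _ _ _ (by linarith) ht)

noncomputable def fdK (α t : ℝ) (w : ℂ) : ℂ :=
  Real.Gamma (1 - α) * cexp (t * cexp w) * cexp ((α - 1) * w) - fdG α t (cexp w)

lemma fdK_bound (α t : ℝ) (hα1 : α < 1) (ht : 0 < t) :
    ∃ A : ℝ, 0 ≤ A ∧ ∀ l θ : ℝ, 0 ≤ θ → θ ≤ Real.pi →
      ‖fdK α t (l + θ * I)‖ ≤ A * (1 + Real.exp ((α - 1) * l)) := by
  have hΓ : 0 < Real.Gamma (1 - α) := Real.Gamma_pos_of_pos (by linarith)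
  set C1 := ∫ σ in Ioc (0:ℝ) t, Real.exp t * (σ ^ (-α) * Real.exp (-(0 * σ))) with hC1
  set C2 := ∫ σ in Ioi t, Real.exp t * (σ ^ (-α) * Real.exp (-(1 * σ))) with hC2
  have hC1p : 0 ≤ C1 := setIntegral_nonneg measurableSet_Ioc fun σ hσ => by
    have := hσ.1
    positivity
  have hC2p : 0 ≤ C2 := setIntegral_nonneg measurableSet_Ioi fun σ hσ => by
    have : 0 < σ := ht.trans hσ
    positivity
  refine ⟨Real.Gamma (1 - α) * Real.exp t + C1 + C2, by positivity, fun l θ hθ0 hθ1 => ?_⟩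
  set w : ℂ := l + θ * I with hw
  have hwre : w.re = l := by simp [hw]
  have hwim : w.im = θ := by simp [hw]
  have hE := Real.exp_pos ((α - 1) * l)
  rcases le_or_gt (cexp w).re 1 with h | h
  · have hg : ‖fdG α t (cexp w)‖ ≤ C1 := by
      refine norm_integral_le_of_norm_le ((fd_int_Ioc _ _ _ (by linarith) ht).const_mul _) ?_
      refine (ae_restrict_iff' measurableSet_Ioc).2 (ae_of_all _ fun σ hσ => ?_)
      have h0 := hσ.1
      have h1 := hσ.2
      rw [norm_mul, norm_real, Real.norm_of_nonneg (by positivity), Complex.norm_exp]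
      have e1 : (cexp w * (t - σ)).re = (cexp w).re * (t - σ) := by
        rw [← Complex.ofReal_sub, Complex.re_mul_ofReal]
      rw [e1]
      simp only [zero_mul, neg_zero, Real.exp_zero, mul_one]
      gcongr
      nlinarith
    have h1 : ‖(Real.Gamma (1 - α) : ℂ) * cexp (t * cexp w) * cexp ((α - 1) * w)‖ ≤
        Real.Gamma (1 - α) * Real.exp t * Real.exp ((α - 1) * l) := by
      rw [norm_mul, norm_mul, norm_real, Real.norm_of_nonneg hΓ.le, Complex.norm_exp,
        Complex.norm_exp]
      have e1 : ((t:ℂ) * cexp w).re = t * (cexp w).re := Complex.re_ofReal_mul _ _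
      have e2 : (((α:ℂ) - 1) * w).re = (α - 1) * l := by
        rw [← Complex.ofReal_one, ← Complex.ofReal_sub, Complex.re_ofReal_mul, hwre]
      rw [e1, e2]
      gcongr
      nlinarith
    refine (norm_sub_le _ _).trans ((add_le_add h1 hg).trans ?_)
    have : 0 < Real.Gamma (1 - α) * Real.exp t := by positivity
    nlinarith [mul_nonneg hC1p hE.le, mul_nonneg hC2p hE.le]
  · have hcos : 0 < Real.cos θ := by
      rw [Complex.exp_re, hwre, hwim] at h
      by_contra hc
      push Not at hc
      nlinarith [Real.exp_pos l]
    have hθ : θ < Real.pi := by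
      rcases hθ1.lt_or_eq with h' | h'
      · exact h'
      · rw [h', Real.cos_pi] at hcos; linarith
    have hlog : Complex.log (cexp w) = w := by
      apply Complex.log_exp
      · rw [hwim]; linarith [Real.pi_pos]
      · rw [hwim]; exact hθ1
    have hpow : cexp ((α - 1) * w) = (cexp w) ^ ((α:ℂ) - 1) := by
      rw [Complex.cpow_def_of_ne_zero (Complex.exp_ne_zero _), hlog, mul_comm]
    set s := cexp w with hs
    have hsre : 0 < s.re := by linarith
    have hInt0 : IntegrableOn (fun σ : ℝ => cexp (-(s * σ)) * ((σ ^ (-α) : ℝ) : ℂ)) (Ioi 0) := by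
      refine (fd_int_Ioi (-α) s.re (by linarith) hsre).mono' ?_ ?_
      · refine Measurable.aestronglyMeasurable ?_
        fun_prop
      · refine (ae_restrict_iff' measurableSet_Ioi).2 (ae_of_all _ fun σ hσ => ?_)
        have hσ : 0 < σ := hσ
        rw [norm_mul, Complex.norm_exp, norm_real, Real.norm_of_nonneg (by positivity), mul_comm]
        simp
    have hK : fdK α t w =
        ∫ σ in Ioi t, cexp (s * t) * (cexp (-(s * σ)) * ((σ ^ (-α) : ℝ) : ℂ)) := by
      rw [fdK, ← hs, fdG_eq, hpow, integral_const_mul]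
      have hL := fd_laplace α hα1 s hsre
      rw [← Ioc_union_Ioi_eq_Ioi ht.le, setIntegral_union (Ioc_disjoint_Ioi le_rfl)
        measurableSet_Ioi (hInt0.mono_set Ioc_subset_Ioi_self)
        (hInt0.mono_set (Ioi_subset_Ioi ht.le))] at hL
      rw [mul_comm (t:ℂ) s]
      linear_combination (-cexp (s * t)) * hL
    have hb : ‖fdK α t w‖ ≤ C2 := by
      rw [hK]
      refine norm_integral_le_of_norm_le
        (((fd_int_Ioi (-α) 1 (by linarith) one_pos).mono_set (Ioi_subset_Ioi ht.le)).const_mul _) ?_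
      refine (ae_restrict_iff' measurableSet_Ioi).2 (ae_of_all _ fun σ hσ => ?_)
      have hσ : t < σ := hσ
      have hσ0 : 0 < σ := ht.trans hσ
      rw [norm_mul, norm_mul, Complex.norm_exp, Complex.norm_exp, norm_real,
        Real.norm_of_nonneg (by positivity)]
      have e1 : (s * t).re = s.re * t := Complex.re_mul_ofReal _ _
      have e2 : (-(s * σ)).re = -(s.re * σ) := by simp
      rw [e1, e2]
      calc Real.exp (s.re * t) * (Real.exp (-(s.re * σ)) * σ ^ (-α))
          = Real.exp (s.re * t + -(s.re * σ)) * σ ^ (-α) := by rw [Real.exp_add]; ring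
        _ ≤ Real.exp (t + -(1 * σ)) * σ ^ (-α) := by
            gcongr ?_ * _
            apply Real.exp_le_exp.2
            nlinarith
        _ = _ := by rw [Real.exp_add]; ring
    refine hb.trans ?_
    have : 0 < Real.Gamma (1 - α) * Real.exp t := by positivity
    nlinarith [mul_nonneg hC1p hE.le, mul_nonneg hC2p hE.le]

noncomputable def fde (ν : ℝ) : ℂ := cexp (Real.pi * ν * I)

lemma fde_re (ν : ℝ) : (fde ν).re = Real.cos (Real.pi * ν) := by
  rw [fde, ← Complex.ofReal_mul, Complex.exp_ofReal_mul_I_re]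

lemma fd_cos_pos (ν : ℝ) (h0 : 0 < ν) (h1 : ν < 1/2) : 0 < Real.cos (Real.pi * ν) := by
  apply Real.cos_pos_of_mem_Ioo
  constructor <;> nlinarith [Real.pi_pos]

noncomputable def fdE (ν y r : ℝ) : ℂ := cexp (-(y * ((r ^ ν : ℝ) : ℂ) * fde ν))

lemma fdE_norm (ν y r : ℝ) :
    ‖fdE ν y r‖ = Real.exp (-(y * Real.cos (Real.pi * ν)) * r ^ ν) := by
  rw [fdE, Complex.norm_exp, Complex.neg_re, ← Complex.ofReal_mul, Complex.re_ofReal_mul, fde_re]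
  congr 1
  ring

lemma fdE_meas (ν y : ℝ) : Measurable (fdE ν y) := by
  unfold fdE
  fun_prop

lemma fd_tendsto (a b ν : ℝ) (ha : 0 < a) (hb : 0 < b) (hν : 0 < ν) :
    Tendsto (fun l : ℝ => Real.exp (a * l) * Real.exp (-b * Real.exp (ν * l))) atTop (𝓝 0) ∧
    Tendsto (fun l : ℝ => Real.exp (a * l) * Real.exp (-b * Real.exp (ν * l))) atBot (𝓝 0) := by
  constructor
  · have h1 := tendsto_rpow_mul_exp_neg_mul_atTop_nhds_zero (a / ν) b hb
    have h2 : Tendsto (fun l : ℝ => Real.exp (ν * l)) atTop atTop :=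
      Real.tendsto_exp_atTop.comp (tendsto_id.const_mul_atTop hν)
    refine (h1.comp h2).congr fun l => ?_
    simp only [Function.comp]
    rw [← Real.exp_mul]
    congr 2
    field_simp
  · have h2 : Tendsto (fun l : ℝ => Real.exp (a * l)) atBot (𝓝 0) :=
      Real.tendsto_exp_atBot.comp (tendsto_id.const_mul_atBot ha)
    refine squeeze_zero (fun l => by positivity) (fun l => ?_) h2
    have : Real.exp (-b * Real.exp (ν * l)) ≤ 1 := by
      apply Real.exp_le_one_iff.2
      have := Real.exp_pos (ν * l)
      nlinarith
    have := Real.exp_pos (a * l)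
    nlinarith

lemma fd_integrable (a b ν : ℝ) (ha : 0 < a) (hb : 0 < b) (hν : 0 < ν) :
    Integrable (fun l : ℝ => Real.exp (a * l) * Real.exp (-b * Real.exp (ν * l))) := by
  have := (fd_cov_int _).1 (integrableOn_rpow_mul_exp_neg_mul_rpow (s := a - 1) (p := ν) (b := b)
    (by linarith) hν hb)
  refine this.congr (ae_of_all _ fun l => ?_)
  simp only [smul_eq_mul]
  rw [← Real.exp_mul, ← Real.exp_mul, ← mul_assoc, ← Real.exp_add]
  congr 2
  · ring
  · rw [mul_comm l ν]

lemma fdE_int (ν y p : ℝ) (h0 : 0 < ν) (h1 : ν < 1/2) (hy : 0 < y) (hp : -1 < p) :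
    IntegrableOn (fun r : ℝ => r ^ p * Real.exp (-(y * Real.cos (Real.pi * ν)) * r ^ ν)) (Ioi 0) :=
  integrableOn_rpow_mul_exp_neg_mul_rpow hp h0 (mul_pos hy (fd_cos_pos ν h0 h1))

lemma fdEg_int (ν y p C : ℝ) (g : ℝ → ℂ) (h0 : 0 < ν) (h1 : ν < 1/2) (hy : 0 < y) (hp : -1 < p)
    (hg : Measurable g) (hC : ∀ r : ℝ, 0 < r → ‖g r‖ ≤ C) :
    IntegrableOn (fun r : ℝ => ((r ^ p : ℝ) : ℂ) * g r * fdE ν y r) (Ioi 0) := by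
  have hE := fdE_meas ν y
  refine ((fdE_int ν y p h0 h1 hy hp).const_mul C).mono' ?_ ?_
  · refine Measurable.aestronglyMeasurable ?_
    fun_prop
  · refine (ae_restrict_iff' measurableSet_Ioi).2 (ae_of_all _ fun r hr => ?_)
    have hr : 0 < r := hr
    rw [norm_mul, norm_mul, fdE_norm, norm_real, Real.norm_of_nonneg (by positivity)]
    have := hC r hr
    calc r ^ p * ‖g r‖ * Real.exp (-(y * Real.cos (Real.pi * ν)) * r ^ ν) ≤
        r ^ p * C * Real.exp (-(y * Real.cos (Real.pi * ν)) * r ^ ν) := by gcongr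
      _ = _ := by ring

lemma fdG_neg_bound (α t : ℝ) (hα1 : α < 1) (ht : 0 < t) :
    ∃ C : ℝ, ∀ r : ℝ, 0 < r → ‖fdG α t (-r)‖ ≤ C := by
  refine ⟨∫ σ in Ioc (0:ℝ) t, (σ ^ (-α) * Real.exp (-(0 * σ))), fun r hr => ?_⟩
  refine norm_integral_le_of_norm_le (fd_int_Ioc _ _ _ (by linarith) ht) ?_
  refine (ae_restrict_iff' measurableSet_Ioc).2 (ae_of_all _ fun σ hσ => ?_)
  have h0 := hσ.1
  have h1 := hσ.2
  rw [norm_mul, norm_real, Real.norm_of_nonneg (by positivity), Complex.norm_exp]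
  have e1 : (-(r:ℂ) * (t - σ)).re = -(r * (t - σ)) := by
    simp
  rw [e1, mul_comm]
  have h2 : 0 ≤ r * (t - σ) := mul_nonneg hr.le (by linarith)
  gcongr ?_ * ?_
  apply Real.exp_le_exp.2
  linarith

noncomputable def fdJ (ν p y t : ℝ) : ℂ :=
  ∫ r in Ioi (0:ℝ), ((r ^ p : ℝ) : ℂ) * ((Real.exp (-(r * t)) : ℝ) : ℂ) * fdE ν y r

lemma fdG_real (α t s : ℝ) : (fdG α t s).im = 0 := by
  have : fdG α t s = ((∫ σ in Ioc (0:ℝ) t, Real.exp (s * (t - σ)) * σ ^ (-α) : ℝ) : ℂ) := by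
    rw [fdG, ← integral_complex_ofReal]
    congr 1
    ext σ
    push_cast
    ring
  rw [this, Complex.ofReal_im]

lemma fd_rot (α x t : ℝ) (hα0 : 0 < α) (hα1 : α < 1) (hx : 0 < x) (ht : 0 < t) :
    Real.Gamma (1 - α) * (fde (α/2) ^ 3 * fdJ (α/2) (3 * (α/2) - 1) x t).im +
      (fde (α/2) * ∫ r in Ioi (0:ℝ),
        ((r ^ (α/2) : ℝ) : ℂ) * fdG α t (-r) * fdE (α/2) x r).im = 0 := by
  obtain ⟨ν, rfl⟩ : ∃ ν, α = 2 * ν := ⟨α/2, by ring⟩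
  rw [show 2 * ν / 2 = ν by ring]
  set α := 2 * ν with hα
  have hν0 : 0 < ν := by linarith
  have hν1 : ν < 1/2 := by linarith
  obtain ⟨A, hA, hK⟩ := fdK_bound α t hα1 ht
  have hGd := fdG_diff α t hα1 ht
  have hcos := fd_cos_pos ν hν0 hν1
  set b := x * Real.cos (Real.pi * ν) with hb
  have hbp : 0 < b := by positivity
  set H : ℂ → ℂ := fun w => cexp ((ν + 1) * w) * cexp (-(x * cexp (ν * w))) * fdK α t w with hH
  have hHd : Differentiable ℂ H := by
    intro w
    have := hGd (cexp w)
    have h2 : DifferentiableAt ℂ (fun w => fdG α t (cexp w)) w :=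
      DifferentiableAt.comp (g := fdG α t) (f := cexp) w this (by fun_prop)
    simp only [hH, fdK]
    fun_prop
  set B : ℝ → ℝ := fun l => A * (Real.exp ((ν + 1) * l) * Real.exp (-b * Real.exp (ν * l)) +
    Real.exp ((ν + α) * l) * Real.exp (-b * Real.exp (ν * l))) with hB
  have hshift := fd_shift H hHd B ?_ ?_ ?_ ?_
  rotate_left
  · exact ((fd_integrable _ _ _ (by linarith) hbp hν0).add
      (fd_integrable _ _ _ (by linarith) hbp hν0)).const_mul A
  · intro l θ hθ0 hθ1
    have hk := hK l θ hθ0 hθ1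
    simp only [hH]
    rw [norm_mul, norm_mul, Complex.norm_exp, Complex.norm_exp]
    have e1 : (((ν:ℂ) + 1) * (l + θ * I)).re = (ν + 1) * l := by simp
    have e2 : (-((x:ℂ) * cexp (ν * (l + θ * I)))).re =
        -(x * (Real.exp (ν * l) * Real.cos (ν * θ))) := by
      rw [Complex.neg_re, Complex.re_ofReal_mul, Complex.exp_re]
      simp
    have e3 : Real.cos (Real.pi * ν) ≤ Real.cos (ν * θ) := by
      apply Real.cos_le_cos_of_nonneg_of_le_pi
      · positivity
      · nlinarith [Real.pi_pos]
      · nlinarith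
    rw [e1, e2]
    calc Real.exp ((ν + 1) * l) * Real.exp (-(x * (Real.exp (ν * l) * Real.cos (ν * θ)))) *
          ‖fdK α t (l + θ * I)‖
        ≤ Real.exp ((ν + 1) * l) * Real.exp (-(x * (Real.exp (ν * l) * Real.cos (Real.pi * ν)))) *
          (A * (1 + Real.exp ((α - 1) * l))) := by gcongr
      _ = B l := by
        simp only [hB]
        rw [show (ν + α) * l = (ν + 1) * l + (α - 1) * l by ring, Real.exp_add, hb,
          show -(x * (Real.exp (ν * l) * Real.cos (Real.pi * ν))) =
            -(x * Real.cos (Real.pi * ν)) * Real.exp (ν * l) by ring]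
        ring
  · have := ((fd_tendsto (ν + 1) _ _ (by linarith) hbp hν0).1.add
      (fd_tendsto (ν + α) _ _ (by linarith) hbp hν0).1).const_mul A
    rw [add_zero, mul_zero] at this
    exact this
  · have := ((fd_tendsto (ν + 1) _ _ (by linarith) hbp hν0).2.add
      (fd_tendsto (ν + α) _ _ (by linarith) hbp hν0).2).const_mul A
    rw [add_zero, mul_zero] at this
    exact this
  have hre : (∫ l : ℝ, H l).im = 0 := by
    have : ∀ l : ℝ, H l = (((H l).re : ℝ) : ℂ) := by
      intro l
      apply Complex.ext
      · simp
      · have hg : (fdG α t (cexp l)).im = 0 := by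
          rw [← Complex.ofReal_exp]; exact fdG_real _ _ _
        have hk : fdK α t l = ((Real.Gamma (1 - α) * Real.exp (t * Real.exp l) *
            Real.exp ((α - 1) * l) - (fdG α t (cexp l)).re : ℝ) : ℂ) := by
          have h3 : fdG α t (cexp l) = (((fdG α t (cexp l)).re : ℝ) : ℂ) := by
            apply Complex.ext <;> simp [hg]
          rw [fdK, h3]
          push_cast
          simp
        simp only [hH]
        rw [hk]
        have : cexp (((ν:ℂ) + 1) * l) * cexp (-(x * cexp (ν * l))) =
          ((Real.exp ((ν+1) * l) * Real.exp (-(x * Real.exp (ν * l))) : ℝ) : ℂ) := by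
          push_cast
          rfl
        rw [this, ← Complex.ofReal_mul]
        simp only [Complex.ofReal_im]
    rw [integral_congr_ae (ae_of_all _ this), integral_complex_ofReal, Complex.ofReal_im]
  obtain ⟨C, hC⟩ := fdG_neg_bound α t hα1 ht
  have hGm : Measurable (fun r : ℝ => fdG α t (-r)) := by
    have := hGd.continuous
    exact Continuous.measurable (by fun_prop)
  have i1 := fdEg_int ν x ν C (fun r : ℝ => fdG α t (-r)) hν0 hν1 hx (by linarith) hGm hC
  have i2 := fdEg_int ν x (3 * ν - 1) 1 (fun r : ℝ => ((Real.exp (-(r * t)) : ℝ) : ℂ)) hν0 hν1 hx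
    (by linarith) (by fun_prop) (fun r hr => by
      rw [norm_real, Real.norm_of_nonneg (by positivity)]
      apply Real.exp_le_one_iff.2
      have := mul_pos hr ht
      linarith)
  have hpi : ∫ l : ℝ, H (l + Real.pi * I) =
      Real.Gamma (1 - α) * (fde ν ^ 3 * fdJ ν (3 * ν - 1) x t) +
      fde ν * ∫ r in Ioi (0:ℝ), ((r ^ ν : ℝ) : ℂ) * fdG α t (-r) * fdE ν x r := by
    rw [fdJ, ← mul_assoc, ← integral_const_mul, ← integral_const_mul, ← integral_add
      (i2.const_mul _) (i1.const_mul _), fd_cov]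
    congr 1
    ext l
    have hs : cexp ((l:ℂ) + Real.pi * I) = -((Real.exp l : ℝ) : ℂ) := by
      rw [Complex.exp_add, Complex.exp_pi_mul_I]; push_cast; ring
    have h1 : cexp (((ν:ℂ) + 1) * (l + Real.pi * I)) =
        -(fde ν * ((Real.exp l : ℝ) : ℂ) * (((Real.exp l) ^ ν : ℝ) : ℂ)) := by
      rw [show ((ν:ℂ) + 1) * (l + Real.pi * I) = (l + Real.pi * I) + (ν * l + Real.pi * ν * I) by
        ring, Complex.exp_add, hs, Complex.exp_add, ← fde, ← Real.exp_mul]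
      push_cast
      rw [mul_comm (l:ℂ) ν]
      ring
    have h2 : cexp ((ν:ℂ) * (l + Real.pi * I)) = (((Real.exp l) ^ ν : ℝ) : ℂ) * fde ν := by
      rw [show (ν:ℂ) * (l + Real.pi * I) = (l * ν + Real.pi * ν * I) by ring, Complex.exp_add,
        ← fde, ← Real.exp_mul]
      push_cast
      rfl
    have h3 : cexp (((α:ℂ) - 1) * (l + Real.pi * I)) =
        -(fde ν ^ 2 * (((Real.exp l) ^ (2 * ν - 1) : ℝ) : ℂ)) := by
      have : ((α:ℂ) - 1) * (l + Real.pi * I) =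
          ((l * (2 * ν - 1) : ℝ) : ℂ) + (((2 : ℕ) : ℂ) * (Real.pi * ν * I) - Real.pi * I) := by
        rw [hα]; push_cast; ring
      rw [this, Complex.exp_add, Complex.exp_sub, Complex.exp_nat_mul, ← fde, Complex.exp_pi_mul_I,
        ← Real.exp_mul]
      push_cast
      ring
    have h4 : (((Real.exp l) ^ (3 * ν - 1) : ℝ) : ℂ) =
        (((Real.exp l) ^ ν : ℝ) : ℂ) * (((Real.exp l) ^ (2 * ν - 1) : ℝ) : ℂ) := by
      rw [← Complex.ofReal_mul, ← Real.rpow_add (Real.exp_pos l)]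
      congr 2
      ring
    simp only [hH]
    rw [fdK, hs, h1, h2, h3, h4, fdE, Complex.real_smul]
    have h5 : cexp ((t:ℂ) * -((Real.exp l : ℝ) : ℂ)) =
        ((Real.exp (-(Real.exp l * t)) : ℝ) : ℂ) := by
      push_cast
      congr 1
      ring
    rw [h5]
    rw [← mul_assoc (x:ℂ)]
    ring
  rw [hshift, hpi, Complex.add_im, Complex.im_ofReal_mul] at hre
  exact hre

lemma fd_exp_norm_le (r t : ℝ) (hr : 0 < r) (ht : 0 ≤ t) :
    ‖((Real.exp (-(r * t)) : ℝ) : ℂ)‖ ≤ 1 := by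
  rw [norm_real, Real.norm_of_nonneg (by positivity)]
  apply Real.exp_le_one_iff.2
  have := mul_nonneg hr.le ht
  linarith

lemma fdJ_int (ν p y t : ℝ) (h0 : 0 < ν) (h1 : ν < 1/2) (hy : 0 < y) (hp : -1 < p) (ht : 0 ≤ t) :
    IntegrableOn (fun r : ℝ => ((r ^ p : ℝ) : ℂ) * ((Real.exp (-(r * t)) : ℝ) : ℂ) * fdE ν y r)
      (Ioi 0) :=
  fdEg_int ν y p 1 (fun r : ℝ => ((Real.exp (-(r * t)) : ℝ) : ℂ)) h0 h1 hy
    hp (by fun_prop) (fun r hr => fd_exp_norm_le r t hr ht)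

lemma fdJ_norm_le (ν p y t r : ℝ) (hr : 0 < r) (ht : 0 ≤ t) :
    ‖((r ^ p : ℝ) : ℂ) * ((Real.exp (-(r * t)) : ℝ) : ℂ) * fdE ν y r‖ ≤
      r ^ p * Real.exp (-(y * Real.cos (Real.pi * ν)) * r ^ ν) := by
  rw [norm_mul, norm_mul, fdE_norm, norm_real, Real.norm_of_nonneg (by positivity)]
  have := fd_exp_norm_le r t hr ht
  calc _ ≤ r ^ p * 1 * Real.exp (-(y * Real.cos (Real.pi * ν)) * r ^ ν) := by gcongr
    _ = _ := by ring

lemma fdJ_deriv_t (ν p y t : ℝ) (h0 : 0 < ν) (h1 : ν < 1/2) (hy : 0 < y) (hp : -1 < p)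
    (ht : 0 < t) : HasDerivAt (fun τ : ℝ => fdJ ν p y τ) (-(fdJ ν (p + 1) y t)) t := by
  have hE := fdE_meas ν y
  have hnhds : Ioi (0:ℝ) ∈ 𝓝 t := Ioi_mem_nhds ht
  have := (hasDerivAt_integral_of_dominated_loc_of_deriv_le
    (μ := volume.restrict (Ioi (0:ℝ)))
    (F := fun (τ : ℝ) (r : ℝ) =>
      ((r ^ p : ℝ) : ℂ) * ((Real.exp (-(r * τ)) : ℝ) : ℂ) * fdE ν y r)
    (F' := fun (τ : ℝ) (r : ℝ) =>
      -(((r ^ (p+1) : ℝ) : ℂ) * ((Real.exp (-(r * τ)) : ℝ) : ℂ) * fdE ν y r))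
    (bound := fun r => r ^ (p+1) * Real.exp (-(y * Real.cos (Real.pi * ν)) * r ^ ν))
    hnhds ?_ (fdJ_int ν p y t h0 h1 hy hp ht.le) ?_ ?_
    (fdE_int ν y (p+1) h0 h1 hy (by linarith)) ?_).2
  · rw [integral_neg] at this
    exact this
  · refine Eventually.of_forall fun s => Measurable.aestronglyMeasurable ?_
    fun_prop
  · refine Measurable.aestronglyMeasurable ?_
    fun_prop
  · refine (ae_restrict_iff' measurableSet_Ioi).2 (ae_of_all _ fun r hr τ hτ => ?_)
    rw [norm_neg]
    exact fdJ_norm_le ν (p+1) y τ r hr (le_of_lt hτ)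
  · refine (ae_restrict_iff' measurableSet_Ioi).2 (ae_of_all _ fun r hr τ hτ => ?_)
    have hr : 0 < r := hr
    have hd : HasDerivAt (fun τ : ℝ => Real.exp (-(r * τ))) (Real.exp (-(r * τ)) * (-(r * 1))) τ :=
      (((hasDerivAt_id τ).const_mul r).neg).exp
    have := (hd.ofReal_comp.const_mul ((r ^ p : ℝ) : ℂ)).mul_const (fdE ν y r)
    refine this.congr_deriv ?_
    rw [Real.rpow_add hr, Real.rpow_one]
    push_cast
    ring

lemma fdJ_deriv_y (ν p y t : ℝ) (h0 : 0 < ν) (h1 : ν < 1/2) (hy : 0 < y) (hp : -1 < p)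
    (ht : 0 < t) :
    HasDerivAt (fun z : ℝ => fdJ ν p z t) (-(fde ν * fdJ ν (p + ν) y t)) y := by
  have hE := fdE_meas ν
  have hcos := fd_cos_pos ν h0 h1
  have hnhds : Ioi (y/2:ℝ) ∈ 𝓝 y := Ioi_mem_nhds (by linarith)
  have hnorm : ‖fde ν‖ = 1 := by
    rw [fde, ← Complex.ofReal_mul, Complex.norm_exp_ofReal_mul_I]
  have := (hasDerivAt_integral_of_dominated_loc_of_deriv_le
    (μ := volume.restrict (Ioi (0:ℝ)))
    (F := fun (z : ℝ) (r : ℝ) =>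
      ((r ^ p : ℝ) : ℂ) * ((Real.exp (-(r * t)) : ℝ) : ℂ) * fdE ν z r)
    (F' := fun (z : ℝ) (r : ℝ) =>
      -fde ν * (((r ^ (p+ν) : ℝ) : ℂ) * ((Real.exp (-(r * t)) : ℝ) : ℂ) * fdE ν z r))
    (bound := fun r => r ^ (p+ν) * Real.exp (-(y/2 * Real.cos (Real.pi * ν)) * r ^ ν))
    hnhds ?_ (fdJ_int ν p y t h0 h1 hy hp ht.le) ?_ ?_
    (fdE_int ν (y/2) (p+ν) h0 h1 (by linarith) (by linarith)) ?_).2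
  · rw [integral_const_mul, neg_mul] at this
    exact this
  · refine Eventually.of_forall fun s => Measurable.aestronglyMeasurable ?_
    have := hE s
    fun_prop
  · refine Measurable.aestronglyMeasurable ?_
    have := hE y
    fun_prop
  · refine (ae_restrict_iff' measurableSet_Ioi).2 (ae_of_all _ fun r hr z hz => ?_)
    have hr : 0 < r := hr
    have hz : y / 2 < z := hz
    rw [norm_mul, norm_neg, hnorm, one_mul]
    refine (fdJ_norm_le ν (p+ν) z t r hr ht.le).trans ?_
    gcongr
  · refine (ae_restrict_iff' measurableSet_Ioi).2 (ae_of_all _ fun r hr z hz => ?_)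
    have hr : 0 < r := hr
    have hd : HasDerivAt (fun z : ℝ => -((z:ℂ) * ((r ^ ν : ℝ) : ℂ) * fde ν))
        (-(1 * ((r ^ ν : ℝ) : ℂ) * fde ν)) z := by
      have h := (((hasDerivAt_id z).ofReal_comp).mul_const ((r ^ ν : ℝ) : ℂ)).mul_const (fde ν)
      exact h.neg.congr_deriv (by simp)
    have := hd.cexp.const_mul (((r ^ p : ℝ) : ℂ) * ((Real.exp (-(r * t)) : ℝ) : ℂ))
    refine this.congr_deriv ?_
    rw [Real.rpow_add hr, fdE]
    push_cast
    ring

lemma fd_young (a ν t : ℝ) (ha : 0 ≤ a) (h0 : 0 < ν) (h1 : ν < 1) (ht : 0 < t) :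
    ∃ C : ℝ, ∀ r : ℝ, 0 < r → a * r ^ ν ≤ C + t / 2 * r := by
  set q : ℝ := (a + 1) ^ (1 / (1 - ν)) * (t/2) ^ (-ν / (1 - ν)) with hq
  refine ⟨(1 - ν) * q, fun r hr => ?_⟩
  have hq0 : 0 ≤ q := by positivity
  have h := Real.geom_mean_le_arith_mean2_weighted (w₁ := ν) (w₂ := 1 - ν) (p₁ := t/2 * r)
    (p₂ := q) h0.le (by linarith) (by positivity) hq0 (by ring)
  have hne : 1 - ν ≠ 0 := by linarith
  have hqp : q ^ (1 - ν) = (a + 1) * (t/2) ^ (-ν) := by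
    rw [hq, Real.mul_rpow (by positivity) (by positivity), ← Real.rpow_mul (by positivity),
      ← Real.rpow_mul (by positivity), div_mul_cancel₀ _ hne, div_mul_cancel₀ _ hne, Real.rpow_one]
  rw [hqp, Real.mul_rpow (by positivity) hr.le, Real.rpow_neg (by positivity)] at h
  have hpos : (t/2) ^ ν ≠ 0 := by positivity
  have e : (t/2) ^ ν * r ^ ν * ((a + 1) * ((t/2) ^ ν)⁻¹) = (a + 1) * r ^ ν := by
    field_simp
  rw [e] at h
  have : 0 < r ^ ν := by positivity
  have : ν * (t/2 * r) ≤ t/2 * r := by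
    have : 0 < t/2 * r := by positivity
    nlinarith
  linarith

lemma fd_gamma_inv (s : ℝ) (hs : 0 < s) :
    (Real.Gamma (1 - s))⁻¹ = Real.Gamma s * Real.sin (Real.pi * s) / Real.pi := by
  have h := Real.Gamma_mul_Gamma_one_sub s
  have hG := (Real.Gamma_pos_of_pos hs).ne'
  have hpi := Real.pi_ne_zero
  by_cases h0 : Real.sin (Real.pi * s) = 0
  · rw [h0, div_zero] at h
    rcases mul_eq_zero.1 h with h | h
    · exact absurd h hG
    · rw [h, h0]; simp
  · have hne : Real.Gamma (1 - s) ≠ 0 := by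
      intro h1
      rw [h1, mul_zero] at h
      exact (div_ne_zero hpi h0) h.symm
    rw [eq_div_iff h0] at h
    rw [inv_eq_iff_eq_inv, inv_div, eq_div_iff (mul_ne_zero hG h0)]
    linarith

lemma fd_repr_hasSum (ν y t : ℝ) (h0 : 0 < ν) (h1 : ν < 1/2) (ht : 0 < t) :
    HasSum (fun n : ℕ => fde ν ^ n * (((-y) ^ n / n.factorial *
      ((1 / t) ^ (ν * (n + 1)) * Real.Gamma (ν * (n + 1))) : ℝ) : ℂ)) (fdJ ν (ν - 1) y t) := by
  obtain ⟨C, hC⟩ := fd_young |y| ν t (abs_nonneg y) h0 (by linarith) ht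
  have hnorm : ‖fde ν‖ = 1 := by
    rw [fde, ← Complex.ofReal_mul, Complex.norm_exp_ofReal_mul_I]
  set F : ℕ → ℝ → ℂ := fun n r => ((r ^ (ν - 1) : ℝ) : ℂ) * ((Real.exp (-(r * t)) : ℝ) : ℂ) *
    ((-(y * ((r ^ ν : ℝ) : ℂ) * fde ν)) ^ n / n.factorial) with hF
  have hsum := hasSum_integral_of_dominated_convergence (μ := volume.restrict (Ioi (0:ℝ))) (F := F)
    (f := fun r : ℝ => ((r ^ (ν - 1) : ℝ) : ℂ) * ((Real.exp (-(r * t)) : ℝ) : ℂ) * fdE ν y r)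
    (bound := fun n r => |r ^ (ν - 1)| * Real.exp (-(r * t)) * ((|y| * |r ^ ν|) ^ n / n.factorial))
    ?_ ?_ ?_ ?_ ?_
  · refine hsum.congr_fun ?_
    intro n
    have hg := Real.integral_rpow_mul_exp_neg_mul_Ioi (a := ν * (n + 1)) (r := t)
      (by positivity) ht
    rw [← hg, Complex.ofReal_mul, ← integral_complex_ofReal, ← mul_assoc, ← integral_const_mul]
    refine setIntegral_congr_fun measurableSet_Ioi fun r hr => ?_
    have hr : 0 < r := hr
    have e : r ^ (ν * ((n:ℝ) + 1) - 1) = r ^ (ν - 1) * (r ^ ν) ^ n := by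
      rw [← Real.rpow_natCast, ← Real.rpow_mul hr.le, ← Real.rpow_add hr]
      congr 1
      ring
    simp only [hF]
    rw [e, mul_comm t r]
    push_cast
    rw [neg_pow ((y:ℂ) * _ * _), mul_pow, mul_pow, neg_pow (y:ℂ)]
    ring
  · intro n
    refine Measurable.aestronglyMeasurable ?_
    simp only [hF]
    fun_prop
  · intro n
    refine ae_of_all _ fun r => ?_
    simp only [hF]
    rw [norm_mul, norm_mul, norm_div, norm_pow, norm_neg, norm_mul, norm_mul, hnorm,
      norm_real (Real.exp _), Real.norm_of_nonneg (Real.exp_pos _).le]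
    simp
  · refine ae_of_all _ fun r => ?_
    exact (Real.summable_pow_div_factorial _).mul_left _
  · have hi : IntegrableOn (fun r : ℝ => Real.exp C * (r ^ (ν - 1) * Real.exp (-(t/2 * r))))
        (Ioi 0) := (fd_int_Ioi (ν - 1) (t/2) (by linarith) (by linarith)).const_mul _
    have heq : ∀ r : ℝ, ∑' n : ℕ, |r ^ (ν - 1)| * Real.exp (-(r * t)) *
        ((|y| * |r ^ ν|) ^ n / n.factorial) =
        |r ^ (ν - 1)| * Real.exp (-(r * t)) * Real.exp (|y| * |r ^ ν|) := by
      intro r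
      rw [tsum_mul_left, Real.exp_eq_exp_ℝ, NormedSpace.exp_eq_tsum_div]
    simp_rw [heq]
    refine hi.mono' ?_ ?_
    · refine Measurable.aestronglyMeasurable ?_
      fun_prop
    · refine (ae_restrict_iff' measurableSet_Ioi).2 (ae_of_all _ fun r hr => ?_)
      have hr : 0 < r := hr
      have hp1 : 0 < r ^ (ν - 1) := by positivity
      have hp2 : 0 < r ^ ν := by positivity
      rw [Real.norm_of_nonneg (by positivity), abs_of_pos hp1,
        abs_of_pos hp2, mul_assoc, ← Real.exp_add, mul_left_comm, ← Real.exp_add]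
      refine mul_le_mul_of_nonneg_left (Real.exp_le_exp.2 ?_) hp1.le
      have := hC r hr
      linarith
  · refine ae_of_all _ fun r => ?_
    simp only [hF]
    refine HasSum.mul_left _ ?_
    rw [fdE, Complex.exp_eq_exp_ℂ]
    exact NormedSpace.expSeries_div_hasSum_exp _

lemma fd_repr (ν y t : ℝ) (h0 : 0 < ν) (h1 : ν < 1/2) (ht : 0 < t) :
    1 / (2 * t ^ ν) * mWright ν (y / t ^ ν) =
      1 / (2 * Real.pi) * (fde ν * fdJ ν (ν - 1) y t).im := by
  have h := (((fd_repr_hasSum ν y t h0 h1 ht).mul_left (fde ν)).mapL Complex.imCLM).mul_left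
    (1 / (2 * Real.pi))
  rw [← Complex.imCLM_apply, ← h.tsum_eq, mWright, ← tsum_mul_left]
  congr 1
  ext n
  rw [← mul_assoc, ← pow_succ', Complex.imCLM_apply, mul_comm (fde ν ^ (n+1)),
    Complex.im_ofReal_mul]
  have him : (fde ν ^ (n+1)).im = Real.sin (Real.pi * (ν * (n + 1))) := by
    rw [fde, ← Complex.exp_nat_mul, ← Complex.exp_ofReal_mul_I_im]
    congr 2
    push_cast
    ring
  rw [him, show -(ν * (n:ℝ)) + 1 - ν = 1 - ν * (n + 1) by ring,
    div_eq_mul_inv (_ ^ n), mul_inv (n.factorial : ℝ), fd_gamma_inv _ (by positivity)]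
  have e : (1 / t) ^ (ν * ((n:ℝ) + 1)) = (t ^ ν)⁻¹ ^ (n + 1) := by
    rw [one_div, Real.inv_rpow ht.le, Real.rpow_mul ht.le, inv_pow, ← Real.rpow_natCast]
    push_cast
    rfl
  have hp : t ^ ν ≠ 0 := by positivity
  rw [e, ← neg_div, div_pow, inv_pow, pow_succ]
  have := Real.pi_ne_zero
  field_simp

lemma fd_fubini (ν α x t : ℝ) (h0 : 0 < ν) (h1 : ν < 1/2) (hα1 : α < 1) (hx : 0 < x) (ht : 0 < t) :
    IntegrableOn (fun σ : ℝ => ((σ ^ (-α) : ℝ) : ℂ) * fdJ ν ν x (t - σ)) (Ioc 0 t) ∧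
    ∫ σ in Ioc (0:ℝ) t, ((σ ^ (-α) : ℝ) : ℂ) * fdJ ν ν x (t - σ) =
      ∫ r in Ioi (0:ℝ), ((r ^ ν : ℝ) : ℂ) * fdG α t (-r) * fdE ν x r := by
  have hE := fdE_meas ν x
  set f : ℝ → ℝ → ℂ := fun σ r => ((σ ^ (-α) : ℝ) : ℂ) *
    (((r ^ ν : ℝ) : ℂ) * ((Real.exp (-(r * (t - σ))) : ℝ) : ℂ) * fdE ν x r) with hf
  have hi : Integrable (Function.uncurry f)
      ((volume.restrict (Ioc (0:ℝ) t)).prod (volume.restrict (Ioi (0:ℝ)))) := by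
    have hb := (fd_int_Ioc (-α) 0 t (by linarith) ht).mul_prod
      (fdE_int ν x ν h0 h1 hx (by linarith))
    refine hb.mono' ?_ ?_
    · refine Measurable.aestronglyMeasurable ?_
      simp only [hf, Function.uncurry_def]
      fun_prop
    · rw [Measure.prod_restrict]
      refine (ae_restrict_iff' (measurableSet_Ioc.prod measurableSet_Ioi)).2
        (ae_of_all _ fun z hz => ?_)
      have hz1 : 0 < z.1 := hz.1.1
      have hz2 : z.1 ≤ t := hz.1.2
      have hz3 : 0 < z.2 := hz.2
      simp only [hf, Function.uncurry_def]
      rw [norm_mul, norm_real, Real.norm_of_nonneg (by positivity)]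
      simp only [zero_mul, neg_zero, Real.exp_zero, mul_one]
      gcongr
      exact fdJ_norm_le ν ν x (t - z.1) z.2 hz3 (by linarith)
  have hin : ∀ σ : ℝ, ∫ r in Ioi (0:ℝ), f σ r = ((σ ^ (-α) : ℝ) : ℂ) * fdJ ν ν x (t - σ) := by
    intro σ
    rw [fdJ, ← integral_const_mul]
  constructor
  · have := hi.integral_prod_left
    refine this.congr (ae_of_all _ fun σ => ?_)
    exact hin σ
  · have := integral_integral_swap hi
    simp_rw [hin] at this
    rw [this]
    congr 1
    ext r
    rw [fdG, ← integral_const_mul, ← integral_mul_const]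
    congr 1
    ext σ
    simp only [hf]
    push_cast
    rw [neg_mul]
    ring

end FracDiff

/-- For `0 < α < 1` and `ν = α/2`, the fundamental solution
`u(x,t) = (1/(2 t^ν)) M_ν(x/t^ν)` of the Cauchy problem satisfies, for `x > 0` and
`t > 0`, the time-fractional diffusion equation with Caputo time derivative:
`(1/Γ(1-α)) ∫₀^t u_τ(x,τ) (t-τ)^(-α) dτ = u_xx(x,t)`. -/
theorem fractional_diffusion_fundamental_solution
    (α : ℝ) (hα0 : 0 < α) (hα1 : α < 1) (x t : ℝ) (hx : 0 < x) (ht : 0 < t) :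
    (1 / Real.Gamma (1 - α)) *
        ∫ τ in (0:ℝ)..t,
          deriv (fun s : ℝ => 1 / (2 * s ^ (α/2)) * mWright (α/2) (x / s ^ (α/2))) τ
            * (t - τ) ^ (-α)
      = deriv
          (deriv (fun y : ℝ => 1 / (2 * t ^ (α/2)) * mWright (α/2) (y / t ^ (α/2)))) x := by
  have h0 : 0 < α/2 := by linarith
  have h1 : α/2 < 1/2 := by linarith
  have hΓ : Real.Gamma (1 - α) ≠ 0 := (Real.Gamma_pos_of_pos (by linarith)).ne'
  have hR : deriv (deriv (fun y : ℝ => 1 / (2 * t ^ (α/2)) * mWright (α/2) (y / t ^ (α/2)))) x =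
      1 / (2 * Real.pi) * (fde (α/2) ^ 3 * fdJ (α/2) (3 * (α/2) - 1) x t).im := by
    have e0 : (fun y : ℝ => 1 / (2 * t ^ (α/2)) * mWright (α/2) (y / t ^ (α/2))) =
        fun y => 1 / (2 * Real.pi) * (fde (α/2) * fdJ (α/2) (α/2 - 1) y t).im :=
      funext fun y => fd_repr (α/2) y t h0 h1 ht
    have d : ∀ (c : ℂ) (p y : ℝ), -1 < p → 0 < y →
        HasDerivAt (fun y => 1 / (2 * Real.pi) * (c * fdJ (α/2) p y t).im)
          (1 / (2 * Real.pi) * (-(c * fde (α/2)) * fdJ (α/2) (p + α/2) y t).im) y := by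
      intro c p y hp hy
      have h := ((fdJ_deriv_y (α/2) p y t h0 h1 hy hp ht).const_mul c)
      have h2 := (Complex.imCLM.hasFDerivAt.comp_hasDerivAt y h).const_mul (1 / (2 * Real.pi))
      refine h2.congr_deriv ?_
      rw [Complex.imCLM_apply]
      congr 2
      ring
    have e1 : deriv (fun y => 1 / (2 * Real.pi) * (fde (α/2) * fdJ (α/2) (α/2 - 1) y t).im)
        =ᶠ[nhds x] fun y => 1 / (2 * Real.pi) *
          (-(fde (α/2) * fde (α/2)) * fdJ (α/2) (α/2 - 1 + α/2) y t).im := by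
      filter_upwards [Ioi_mem_nhds hx] with y hy
      exact (d _ _ y (by linarith) hy).deriv
    rw [e0, e1.deriv_eq, (d _ _ x (by linarith) hx).deriv]
    congr 2
    rw [show α/2 - 1 + α/2 + α/2 = 3 * (α/2) - 1 by ring]
    ring
  have hL : ∀ τ : ℝ, 0 < τ →
      deriv (fun s : ℝ => 1 / (2 * s ^ (α/2)) * mWright (α/2) (x / s ^ (α/2))) τ =
        -(1 / (2 * Real.pi)) * (fde (α/2) * fdJ (α/2) (α/2) x τ).im := by
    intro τ hτ
    have e0 : (fun s : ℝ => 1 / (2 * s ^ (α/2)) * mWright (α/2) (x / s ^ (α/2))) =ᶠ[nhds τ]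
        fun s => 1 / (2 * Real.pi) * (fde (α/2) * fdJ (α/2) (α/2 - 1) x s).im := by
      filter_upwards [Ioi_mem_nhds hτ] with s hs
      exact fd_repr (α/2) x s h0 h1 hs
    rw [e0.deriv_eq]
    have h := ((fdJ_deriv_t (α/2) (α/2 - 1) x τ h0 h1 hx (by linarith) hτ).const_mul (fde (α/2)))
    have h2 := (Complex.imCLM.hasFDerivAt.comp_hasDerivAt τ h).const_mul (1 / (2 * Real.pi))
    refine h2.deriv.trans ?_
    rw [Complex.imCLM_apply, sub_add_cancel, mul_neg, Complex.neg_im]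
    ring
  have hI : ∫ τ in (0:ℝ)..t,
      deriv (fun s : ℝ => 1 / (2 * s ^ (α/2)) * mWright (α/2) (x / s ^ (α/2))) τ
            * (t - τ) ^ (-α) =
      -(1 / (2 * Real.pi)) * (fde (α/2) * ∫ r in Set.Ioi (0:ℝ),
        ((r ^ (α/2) : ℝ) : ℂ) * fdG α t (-r) * fdE (α/2) x r).im := by
    obtain ⟨hf1, hf2⟩ := fd_fubini (α/2) α x t h0 h1 hα1 hx ht
    have s1 : ∫ τ in (0:ℝ)..t,
        deriv (fun s : ℝ => 1 / (2 * s ^ (α/2)) * mWright (α/2) (x / s ^ (α/2))) τ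
            * (t - τ) ^ (-α) =
        ∫ τ in (0:ℝ)..t, (fun σ : ℝ => -(1 / (2 * Real.pi)) *
          (fde (α/2) * (((σ ^ (-α) : ℝ) : ℂ) * fdJ (α/2) (α/2) x (t - σ))).im) (t - τ) := by
      rw [intervalIntegral.integral_of_le ht.le, intervalIntegral.integral_of_le ht.le]
      refine setIntegral_congr_fun measurableSet_Ioc fun τ hτ => ?_
      simp only
      rw [hL τ hτ.1, sub_sub_cancel, mul_left_comm (fde _), Complex.im_ofReal_mul]
      ring
    rw [s1, intervalIntegral.integral_comp_sub_left (fun σ : ℝ => -(1 / (2 * Real.pi)) *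
          (fde (α/2) * (((σ ^ (-α) : ℝ) : ℂ) * fdJ (α/2) (α/2) x (t - σ))).im) t, sub_self, sub_zero,
      intervalIntegral.integral_of_le ht.le, integral_const_mul, ← hf2]
    congr 1
    rw [← integral_const_mul (fde (α/2))]
    exact Complex.imCLM.integral_comp_comm (hf1.const_mul _)
  have hrot := fd_rot α x t hα0 hα1 hx ht
  rw [hR, hI]
  set P := (fde (α/2) ^ 3 * fdJ (α/2) (3 * (α/2) - 1) x t).im
  have := Real.pi_ne_zero
  field_simp
  linear_combination (-1 : ℝ) * hrot
end
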